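/- arXiv:2503.02822 — 4 statements merged into one kernel-verified Lean document; each statement's English description precedes it below -/
import Mathlib

section
/- For every r ∈ ℕ, the integral I_r := ∫_{y ∈ ℝ_{>0}^r, h_r(y) ≤ 1} dy is finite, and for every ε > 0 and 1 ≤ a ≤ r, the restricted integral I_{r,a,ε} := ∫_{y ∈ ℝ_{>0}^r, h_r(y) ≤ 1, y_a ≤ ε} dy satisfies I_{r,a,ε} ≤ C(r) · ε^{1/r} for some constant C(r) depending only on r. -/
open Finset MeasureTheory

/-- `h_r(y) = ∏_{1 ≤ ℓ ≤ j ≤ r} (y_ℓ + ⋯ + y_j)`. -/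
noncomputable def hpoly (r : ℕ) (y : Fin r → ℝ) : ℝ :=
  ∏ p ∈ Finset.univ.filter (fun p : Fin r × Fin r => p.1 ≤ p.2),
    ∑ i ∈ Finset.Icc p.1 p.2, y i

theorem one_le_prod_aux {n : ℕ} {f : Fin n → ℝ} (h : ∀ i, 1 ≤ f i) : 1 ≤ ∏ i, f i := by
  calc (1:ℝ) = ∏ _i : Fin n, (1:ℝ) := by simp
    _ ≤ _ := Finset.prod_le_prod (fun _ _ => zero_le_one) (fun i _ => h i)

noncomputable def maxP {n : ℕ} (y : Fin n → ℝ) : ℝ :=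
  (∏ l, ∏ j, max (y l) (y j)) * (∏ l, y l)

noncomputable def maxG {n : ℕ} (y : Fin n → ℝ) : ℝ :=
  (∏ l, ∏ j, max (y l) (y j)) * (∏ l, y l) ^ 3

theorem maxP_le {r : ℕ} (y : Fin r → ℝ) (hy : ∀ i, 0 < y i) : maxP y ≤ hpoly r y ^ 2 := by
  classical
  have e1 : hpoly r y = ∏ p : Fin r × Fin r, if p.1 ≤ p.2 then ∑ i ∈ Finset.Icc p.1 p.2, y i else 1 := by
    unfold hpoly
    rw [Finset.prod_filter]
  have e2 : hpoly r y = ∏ p : Fin r × Fin r, if p.2 ≤ p.1 then ∑ i ∈ Finset.Icc p.2 p.1, y i else 1 := by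
    rw [e1]
    exact Fintype.prod_equiv (Equiv.prodComm _ _) _ _ (fun p => rfl)
  have e3 : maxP y = ∏ p : Fin r × Fin r, (max (y p.1) (y p.2) * if p.1 = p.2 then y p.1 else 1) := by
    rw [Finset.prod_mul_distrib, Fintype.prod_prod_type, Fintype.prod_prod_type]
    unfold maxP
    simp
  have hl : ∀ a b : Fin r, a ≤ b → y a ≤ ∑ i ∈ Finset.Icc a b, y i := fun a b h =>
    Finset.single_le_sum (f := y) (fun i _ => (hy i).le) (Finset.mem_Icc.2 ⟨le_rfl, h⟩)
  have hr : ∀ a b : Fin r, a ≤ b → y b ≤ ∑ i ∈ Finset.Icc a b, y i := fun a b h =>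
    Finset.single_le_sum (f := y) (fun i _ => (hy i).le) (Finset.mem_Icc.2 ⟨h, le_rfl⟩)
  rw [sq]
  nth_rewrite 1 [e1]
  rw [e2, e3, ← Finset.prod_mul_distrib]
  apply Finset.prod_le_prod
  · rintro ⟨a, b⟩ _
    have := hy a
    dsimp only
    split_ifs <;> positivity
  · rintro ⟨a, b⟩ _
    dsimp only
    rcases lt_trichotomy a b with h | h | h
    · simp only [h.le, h.ne, not_le.2 h, if_true, if_false, mul_one]
      exact max_le (hl a b h.le) (hr a b h.le)
    · subst h
      simp
    · simp only [h.le, h.ne', not_le.2 h, if_true, if_false, mul_one, one_mul]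
      exact max_le (hr b a h.le) (hl b a h.le)

theorem maxG_le {n : ℕ} (y : Fin (n + 1) → ℝ) (hy : ∀ i, 0 < y i) (a : Fin (n + 1)) :
    maxG (fun i => y (a.succAbove i)) * y a ^ 2 ≤ maxP y := by
  unfold maxG maxP
  rw [Fin.prod_univ_succAbove (fun l => ∏ j, max (y l) (y j)) a, Fin.prod_univ_succAbove y a,
    Fin.prod_univ_succAbove (fun j => max (y a) (y j)) a]
  simp_rw [fun l => Fin.prod_univ_succAbove (fun j => max (y (a.succAbove l)) (y j)) a]
  rw [Finset.prod_mul_distrib]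
  have h1 : ∏ i, y (a.succAbove i) ≤ ∏ i, max (y a) (y (a.succAbove i)) :=
    Finset.prod_le_prod (fun i _ => (hy _).le) (fun i _ => le_max_right _ _)
  have h2 : ∏ i, y (a.succAbove i) ≤ ∏ i, max (y (a.succAbove i)) (y a) :=
    Finset.prod_le_prod (fun i _ => (hy _).le) (fun i _ => le_max_left _ _)
  have h0 : 0 < ∏ i, y (a.succAbove i) := Finset.prod_pos (fun i _ => hy _)
  have h3 : 0 ≤ ∏ i, ∏ j, max (y (a.succAbove i)) (y (a.succAbove j)) :=
    Finset.prod_nonneg fun i _ => Finset.prod_nonneg fun j _ => le_max_of_le_left (hy _).le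
  have ha := hy a
  rw [max_self]
  generalize (∏ i, y (a.succAbove i)) = p at *
  generalize (∏ i, max (y a) (y (a.succAbove i))) = q at *
  generalize (∏ i, max (y (a.succAbove i)) (y a)) = q' at *
  generalize (∏ i, ∏ j, max (y (a.succAbove i)) (y (a.succAbove j))) = m at *
  have : p * p ≤ q * q' := mul_le_mul h1 h2 h0.le (h0.le.trans h1)
  calc m * p ^ 3 * y a ^ 2 = (p * p) * (m * p * y a ^ 2) := by ring
    _ ≤ (q * q') * (m * p * y a ^ 2) := by gcongr
    _ = _ := by ring

noncomputable def gfun (u : ℝ) : ℝ :=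
  (Set.Ioc (0:ℝ) 1).indicator (fun u => u ^ (-8/9 : ℝ)) u +
    (Set.Ioi (1:ℝ)).indicator (fun u => u ^ (-10/9 : ℝ)) u

theorem gfun_int : Integrable gfun := by
  apply Integrable.add
  · rw [integrable_indicator_iff measurableSet_Ioc,
      ← intervalIntegrable_iff_integrableOn_Ioc_of_le zero_le_one]
    exact intervalIntegral.intervalIntegrable_rpow' (by norm_num)
  · rw [integrable_indicator_iff measurableSet_Ioi]
    exact integrableOn_Ioi_rpow_of_lt (by norm_num) one_pos

theorem gfun_eq {u : ℝ} (hu : 0 < u) :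
    gfun u = Real.exp (-Real.log u - |Real.log u| / 9) := by
  unfold gfun
  rcases le_or_gt u 1 with h | h
  · rw [Set.indicator_of_mem (Set.mem_Ioc.2 ⟨hu, h⟩),
      Set.indicator_of_notMem (by simpa using h), Real.rpow_def_of_pos hu,
      abs_of_nonpos (Real.log_nonpos hu.le h)]
    ring_nf
  · rw [Set.indicator_of_notMem (by simp [h]), 
      Set.indicator_of_mem (Set.mem_Ioi.2 h), Real.rpow_def_of_pos hu,
      abs_of_nonneg (Real.log_nonneg h.le)]
    ring_nf

theorem log_ineq {n : ℕ} (L : Fin n → ℝ)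
    (h : (∑ l, ∑ j, max (L l) (L j)) + 3 * ∑ l, L l ≤ 0) :
    0 ≤ ∑ l, (- L l - |L l| / 9) := by
  rcases Nat.eq_zero_or_pos n with rfl | hn
  · simp
  have hn1 : (1:ℝ) ≤ n := by exact_mod_cast hn
  have e1 : ∑ l, ∑ j, max (L l) (L j) = n * ∑ l, L l + (∑ l, ∑ j, |L l - L j|) / 2 := by
    have hmx : ∀ x y : ℝ, max x y = x / 2 + y / 2 + |x - y| / 2 := by
      intro x y
      rcases le_total x y with h | h
      · rw [max_eq_right h, abs_of_nonpos (by linarith)]; ring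
      · rw [max_eq_left h, abs_of_nonneg (by linarith)]; ring
    simp_rw [hmx]
    simp [Finset.sum_add_distrib, ← Finset.mul_sum, ← Finset.sum_div]
    ring
  have e2 : n * ∑ l, |L l| ≤ n * |∑ l, L l| + ∑ l, ∑ j, |L l - L j| := by
    have : ∀ l, n * |L l| ≤ |∑ l, L l| + ∑ j, |L l - L j| := by
      intro l
      have : (n:ℝ) * L l = ∑ l, L l + ∑ j, (L l - L j) := by
        simp [Finset.sum_sub_distrib]
      calc (n:ℝ) * |L l| = |n * L l| := by rw [abs_mul, Nat.abs_cast]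
        _ ≤ _ := by
          rw [this]
          exact (abs_add_le _ _).trans (add_le_add le_rfl (Finset.abs_sum_le_sum_abs _ _))
    calc n * ∑ l, |L l| = ∑ l, n * |L l| := by rw [Finset.mul_sum]
      _ ≤ ∑ l, (|∑ l, L l| + ∑ j, |L l - L j|) := Finset.sum_le_sum fun l _ => this l
      _ = _ := by simp [Finset.sum_add_distrib]
  have hQ : 0 ≤ ∑ l, ∑ j, |L l - L j| :=
    Finset.sum_nonneg fun i _ => Finset.sum_nonneg fun j _ => abs_nonneg _
  rw [e1] at h
  rw [Finset.sum_sub_distrib, Finset.sum_neg_distrib, ← Finset.sum_div]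
  generalize (∑ l, ∑ j, |L l - L j|) = Q at *
  generalize (∑ l, |L l|) = A at *
  generalize (∑ l, L l) = S at *
  have hS : S ≤ 0 := by
    by_contra hS
    push Not at hS
    nlinarith
  rw [abs_of_nonpos hS] at e2
  have : n * A ≤ n * (9 * (-S)) := by nlinarith
  have := le_of_mul_le_mul_left this (by linarith)
  linarith

theorem maxG_nonneg {n : ℕ} (y : Fin n → ℝ) (hy : ∀ i, 0 < y i) : 0 ≤ maxG y :=
  mul_nonneg (Finset.prod_nonneg fun l _ => Finset.prod_nonneg fun j _ => le_max_of_le_left (hy l).le)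
    (pow_nonneg (Finset.prod_nonneg fun l _ => (hy l).le) 3)

theorem vol_maxG (n : ℕ) :
    volume {y : Fin n → ℝ | (∀ i, 0 < y i) ∧ maxG y ≤ 1} < ⊤ := by
  have hint : Integrable (fun y : Fin n → ℝ => ∏ i, gfun (y i)) :=
    Integrable.fintype_prod (f := fun _ => gfun) (fun _ => gfun_int)
  have := hint.measure_norm_ge_lt_top (ε := 1) one_pos
  refine lt_of_le_of_lt (measure_mono ?_) this
  rintro y ⟨hy, hG⟩
  have h1 : 1 ≤ ∏ i, gfun (y i) := by
    simp_rw [fun i => gfun_eq (hy i)]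
    rw [← Real.exp_sum, Real.one_le_exp_iff]
    apply log_ineq (fun i => Real.log (y i))
    have hm : ∀ l j, 0 < max (y l) (y j) := fun l j => lt_max_of_lt_left (hy l)
    have hlm : ∀ l j, max (Real.log (y l)) (Real.log (y j)) = Real.log (max (y l) (y j)) := by
      intro l j
      rcases le_total (y l) (y j) with h | h
      · rw [max_eq_right h, max_eq_right (Real.log_le_log (hy _) h)]
      · rw [max_eq_left h, max_eq_left (Real.log_le_log (hy _) h)]
    have : Real.log (maxG y) ≤ 0 := Real.log_nonpos (maxG_nonneg y hy) hG
    unfold maxG at this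
    rw [Real.log_mul (Finset.prod_pos fun l _ => Finset.prod_pos fun j _ => hm l j).ne'
      (pow_pos (Finset.prod_pos fun l _ => hy l) 3).ne', Real.log_pow,
      Real.log_prod fun i _ => (hy i).ne',
      Real.log_prod fun i _ => (Finset.prod_pos fun j _ => hm i j).ne'] at this
    simp_rw [fun l => Real.log_prod (s := Finset.univ) (f := fun j => max (y l) (y j)) fun i _ => (hm l i).ne'] at this
    simp_rw [hlm]
    exact_mod_cast this
  simp only [Set.mem_ofPred_eq, Real.norm_eq_abs]
  exact h1.trans (le_abs_self _)

theorem maxG_smul {n : ℕ} (y : Fin n → ℝ) (c : ℝ) (hc : 0 ≤ c) :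
    maxG (c • y) = c ^ (n * n + 3 * n) * maxG y := by
  unfold maxG
  simp only [Pi.smul_apply, smul_eq_mul, ← mul_max_of_nonneg _ _ hc, Finset.prod_mul_distrib]
  simp
  ring

theorem slice_vol (n : ℕ) (z : ℝ) (hz : 0 < z) (hz1 : z ≤ 1) :
    volume {y : Fin n → ℝ | (∀ i, 0 < y i) ∧ maxG y * z ^ 2 ≤ 1} ≤
      ENNReal.ofReal (z ^ (1 / ((n:ℝ) + 1) - 1)) *
        volume {y : Fin n → ℝ | (∀ i, 0 < y i) ∧ maxG y ≤ 1} := by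
  set c : ℝ := z ^ (1 / ((n:ℝ) + 1)) with hc
  have hc0 : 0 < c := Real.rpow_pos_of_pos hz _
  have hc1 : c ≤ 1 := Real.rpow_le_one hz.le hz1 (by positivity)
  have hcz : c ^ (n + 1) = z := by
    rw [hc, ← Real.rpow_natCast, ← Real.rpow_mul hz.le]
    push_cast
    rw [one_div_mul_cancel (by positivity), Real.rpow_one]
  have hs : z ^ (1 / ((n:ℝ) + 1) - 1) = |c⁻¹ ^ Module.finrank ℝ (Fin n → ℝ)| := by
    rw [abs_of_nonneg (by positivity), Real.rpow_sub hz, ← hc, Real.rpow_one]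
    rw [div_eq_iff hz.ne', ← hcz]
    simp
    field_simp
    ring
  rw [hs, ← Measure.addHaar_smul]
  apply measure_mono
  rintro y ⟨hy, hG⟩
  rw [Set.mem_smul_set_iff_inv_smul_mem₀ (by positivity), inv_inv]
  refine ⟨fun i => mul_pos hc0 (hy i), ?_⟩
  rcases Nat.eq_zero_or_pos n with rfl | hn
  · simp [maxG]
  rw [maxG_smul _ _ hc0.le]
  calc c ^ (n * n + 3 * n) * maxG y ≤ c ^ ((n + 1) * 2) * maxG y := by
        apply mul_le_mul_of_nonneg_right _ (maxG_nonneg y hy)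
        exact pow_le_pow_of_le_one hc0.le hc1 (by nlinarith)
    _ = maxG y * z ^ 2 := by rw [pow_mul, hcz]; ring
    _ ≤ 1 := hG

theorem main_bound (n : ℕ) (a : Fin (n + 1)) (ε : ℝ) (hε : 0 < ε) (hε1 : ε ≤ 1) :
    volume {y : Fin (n + 1) → ℝ | (∀ i, 0 < y i) ∧ hpoly (n + 1) y ≤ 1 ∧ y a ≤ ε} ≤
      ENNReal.ofReal ((n + 1) * ε ^ (1 / ((n:ℝ) + 1))) *
        volume {y : Fin n → ℝ | (∀ i, 0 < y i) ∧ maxG y ≤ 1} := by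
  set K := volume {y : Fin n → ℝ | (∀ i, 0 < y i) ∧ maxG y ≤ 1}
  let B : Set (ℝ × (Fin n → ℝ)) :=
    {p | (0 < p.1 ∧ p.1 ≤ ε) ∧ (∀ i, 0 < p.2 i) ∧ maxG p.2 * p.1 ^ 2 ≤ 1}
  have hB : MeasurableSet B := by
    have hm : Measurable fun p : ℝ × (Fin n → ℝ) => maxG p.2 * p.1 ^ 2 := by
      unfold maxG
      fun_prop
    have h1 : MeasurableSet {p : ℝ × (Fin n → ℝ) | ∀ i, 0 < p.2 i} := by
      simp only [Set.ofPred_forall]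
      exact MeasurableSet.iInter fun i => measurableSet_lt (by fun_prop) (by fun_prop)
    have h2 : MeasurableSet {p : ℝ × (Fin n → ℝ) | 0 < p.1} :=
      measurableSet_lt measurable_const measurable_fst
    have h3 : MeasurableSet {p : ℝ × (Fin n → ℝ) | p.1 ≤ ε} :=
      measurableSet_le measurable_fst measurable_const
    exact (h2.inter h3).inter (h1.inter (measurableSet_le hm measurable_const))
  have hmp := volume_preserving_piFinSuccAbove (fun _ : Fin (n + 1) => ℝ) a
  have hpow : ∀ y : Fin (n + 1) → ℝ, (∀ i, 0 < y i) → hpoly (n + 1) y ≤ 1 →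
      hpoly (n + 1) y ^ 2 ≤ 1 := by
    intro y hy h
    apply pow_le_one₀ _ h
    unfold hpoly
    exact Finset.prod_nonneg fun p _ => Finset.sum_nonneg fun i _ => (hy i).le
  calc volume {y : Fin (n + 1) → ℝ | (∀ i, 0 < y i) ∧ hpoly (n + 1) y ≤ 1 ∧ y a ≤ ε}
      ≤ volume ((MeasurableEquiv.piFinSuccAbove (fun _ : Fin (n + 1) => ℝ) a) ⁻¹' B) := by
        apply measure_mono
        rintro y ⟨hy, hh, hya⟩
        exact ⟨⟨hy a, hya⟩, fun i => hy _,
          (maxG_le y hy a).trans ((maxP_le y hy).trans (hpow y hy hh))⟩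
    _ = volume B := hmp.measure_preimage hB.nullMeasurableSet
    _ = ∫⁻ z, volume (Prod.mk z ⁻¹' B) := by
        rw [Measure.volume_eq_prod, Measure.prod_apply hB]
    _ ≤ ∫⁻ z, (Set.Ioc 0 ε).indicator
          (fun z => ENNReal.ofReal (z ^ (1 / ((n:ℝ) + 1) - 1)) * K) z := by
        apply lintegral_mono
        intro z
        by_cases hz : z ∈ Set.Ioc 0 ε
        · rw [Set.indicator_of_mem hz]
          refine le_trans (measure_mono ?_) (slice_vol n z hz.1 (hz.2.trans hε1))
          rintro y hy
          exact hy.2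
        · have : Prod.mk z ⁻¹' B = ∅ := by
            ext y
            simp only [Set.mem_preimage, Set.mem_empty_iff_false, iff_false]
            exact fun h => hz h.1
          simp [this]
    _ = (∫⁻ z in Set.Ioc 0 ε, ENNReal.ofReal (z ^ (1 / ((n:ℝ) + 1) - 1))) * K := by
        rw [lintegral_indicator measurableSet_Ioc, lintegral_mul_const]
        fun_prop
    _ = _ := by
        have hgt : -1 < 1 / ((n:ℝ) + 1) - 1 := by
          have : 0 < 1 / ((n:ℝ) + 1) := by positivity
          linarith
        rw [← ofReal_integral_eq_lintegral_ofReal]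
        · rw [← intervalIntegral.integral_of_le hε.le, integral_rpow (Or.inl hgt)]
          congr 2
          rw [sub_add_cancel, Real.zero_rpow (by positivity)]
          field_simp
          ring
        · exact ((intervalIntegrable_iff_integrableOn_Ioc_of_le hε.le).1
            (intervalIntegral.intervalIntegrable_rpow' hgt))
        · filter_upwards [ae_restrict_mem measurableSet_Ioc] with z hz
          exact Real.rpow_nonneg hz.1.le _

/-- Lemma 2.2: `I_r < ∞` and `I_{r,a,ε} ≪_r ε^{1/r}`. -/
theorem stmt1 (r : ℕ) (hr : 1 ≤ r) :
    volume {y : Fin r → ℝ | (∀ i, 0 < y i) ∧ hpoly r y ≤ 1} < ⊤ ∧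
    ∃ C : ℝ, ∀ ε : ℝ, 0 < ε → ∀ a : Fin r,
      volume {y : Fin r → ℝ | (∀ i, 0 < y i) ∧ hpoly r y ≤ 1 ∧ y a ≤ ε}
        ≤ ENNReal.ofReal (C * ε ^ ((1 : ℝ) / r)) := by
  obtain ⟨n, rfl⟩ : ∃ n, r = n + 1 := ⟨r - 1, by omega⟩
  set K := volume {y : Fin n → ℝ | (∀ i, 0 < y i) ∧ maxG y ≤ 1} with hK
  have hKt : K < ⊤ := vol_maxG n
  have hfin : volume {y : Fin (n + 1) → ℝ | (∀ i, 0 < y i) ∧ hpoly (n + 1) y ≤ 1} < ⊤ := by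
    refine lt_of_le_of_lt (measure_mono (t := ⋃ a : Fin (n + 1),
      {y : Fin (n + 1) → ℝ | (∀ i, 0 < y i) ∧ hpoly (n + 1) y ≤ 1 ∧ y a ≤ 1}) ?_) ?_
    · rintro y ⟨hy, hh⟩
      rw [Set.mem_iUnion]
      by_contra hcon
      push Not at hcon
      have h1 : ∀ a, 1 < y a := by
        intro a
        by_contra h
        exact hcon a ⟨hy, hh, not_lt.1 h⟩
      have h2 : 1 < maxP y := by
        unfold maxP
        have p1 : 1 ≤ ∏ l, ∏ j, max (y l) (y j) := by
          apply one_le_prod_aux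
          intro l
          apply one_le_prod_aux
          intro j
          exact (h1 l).le.trans (le_max_left _ _)
        have p2 : 1 < ∏ l, y l := by
          rw [Fin.prod_univ_succ]
          have : 1 ≤ ∏ i : Fin n, y i.succ := one_le_prod_aux fun i => (h1 _).le
          nlinarith [h1 0]
        nlinarith
      have h3 := maxP_le y hy
      have h4 : 0 ≤ hpoly (n + 1) y := by
        unfold hpoly
        exact Finset.prod_nonneg fun p _ => Finset.sum_nonneg fun i _ => (hy i).le
      nlinarith
    · refine lt_of_le_of_lt (measure_iUnion_fintype_le _ _) ?_
      rw [ENNReal.sum_lt_top]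
      intro a _
      exact lt_of_le_of_lt (main_bound n a 1 one_pos le_rfl)
        (ENNReal.mul_lt_top ENNReal.ofReal_lt_top hKt)
  refine ⟨hfin, ?_⟩
  set V := volume {y : Fin (n + 1) → ℝ | (∀ i, 0 < y i) ∧ hpoly (n + 1) y ≤ 1} with hV
  refine ⟨(n + 1) * K.toReal + V.toReal, fun ε hε a => ?_⟩
  have hK0 : 0 ≤ K.toReal := ENNReal.toReal_nonneg
  have hV0 : 0 ≤ V.toReal := ENNReal.toReal_nonneg
  push_cast
  rcases le_total ε 1 with h | h
  · refine (main_bound n a ε hε h).trans ?_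
    rw [← hK, ← ENNReal.ofReal_toReal hKt.ne, ← ENNReal.ofReal_mul (by positivity)]
    apply ENNReal.ofReal_le_ofReal
    rw [ENNReal.toReal_ofReal hK0]
    have : 0 ≤ ε ^ (1 / ((n:ℝ) + 1)) := by positivity
    nlinarith [mul_nonneg hV0 this]
  · calc _ ≤ V := measure_mono fun y hy => ⟨hy.1, hy.2.1⟩
      _ = ENNReal.ofReal V.toReal := (ENNReal.ofReal_toReal hfin.ne).symm
      _ ≤ _ := by
        apply ENNReal.ofReal_le_ofReal
        have : 1 ≤ ε ^ (1 / ((n:ℝ) + 1)) := Real.one_le_rpow h (by positivity)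
        have h5 : 0 ≤ (n + 1) * K.toReal := by positivity
        nlinarith
end

section
/- For every r ∈ ℕ and real x > 0, the number of lattice points k ∈ ℕ^r (positive integer coordinates) with h_r(k) ≤ x equals I_r · x^{2/(r+1)} + O_r(x^{2(r-1)/r²}), where I_r := ∫_{y ∈ ℝ_{>0}^r, h_r(y) ≤ 1} dy. -/
open Finset MeasureTheory

lemma hp_mono {r : ℕ} {y z : Fin r → ℝ} (hy : ∀ i, 0 ≤ y i) (h : ∀ i, y i ≤ z i) :
    hpoly r y ≤ hpoly r z := by
  unfold hpoly
  apply Finset.prod_le_prod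
  · intro p _
    exact Finset.sum_nonneg (fun i _ => hy i)
  · intro p _
    exact Finset.sum_le_sum (fun i _ => h i)

lemma hp_smul {r : ℕ} (c : ℝ) (y : Fin r → ℝ) :
    hpoly r (fun i => c * y i) = c ^ (#(Finset.univ.filter (fun p : Fin r × Fin r => p.1 ≤ p.2))) * hpoly r y := by
  unfold hpoly
  simp_rw [← Finset.mul_sum]
  rw [Finset.prod_mul_distrib, Finset.prod_const]

/-- symmetric double sums -/
lemma sum_filter_le {r : ℕ} (f : Fin r → Fin r → ℝ) (hf : ∀ a b, f a b = f b a) :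
    2 * ∑ p ∈ Finset.univ.filter (fun p : Fin r × Fin r => p.1 ≤ p.2), f p.1 p.2
      = ∑ a, ∑ b, f a b + ∑ a, f a a := by
  have h1 : ∑ p ∈ Finset.univ.filter (fun p : Fin r × Fin r => p.1 ≤ p.2), f p.1 p.2
      = ∑ a, ∑ b, if a ≤ b then f a b else 0 := by
    rw [Finset.sum_filter, Fintype.sum_prod_type]
  have h2 : ∑ a, ∑ b, (if a ≤ b then f a b else 0) = ∑ a, ∑ b, (if b ≤ a then f a b else 0) := by
    rw [Finset.sum_comm]
    refine Finset.sum_congr rfl fun a _ => Finset.sum_congr rfl fun b _ => ?_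
    rw [hf]
  have h3 : ∑ a, f a a = ∑ a, ∑ b, (if a = b then f a b else 0) := by simp
  rw [h1, two_mul]
  nth_rewrite 2 [h2]
  rw [h3, ← Finset.sum_add_distrib, ← Finset.sum_add_distrib]
  refine Finset.sum_congr rfl fun a _ => ?_
  rw [← Finset.sum_add_distrib, ← Finset.sum_add_distrib]
  refine Finset.sum_congr rfl fun b _ => ?_
  rcases lt_trichotomy a b with h | h | h
  · simp [h.le, h.ne, h.not_ge]
  · simp [h]
  · simp [h.le, h.ne', h.not_ge]

lemma card_filter {r : ℕ} :
    2 * (#(Finset.univ.filter (fun p : Fin r × Fin r => p.1 ≤ p.2)) : ℝ) = r * (r + 1) := by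
  have := sum_filter_le (r := r) (fun _ _ => 1) (fun _ _ => rfl)
  simp only [Finset.sum_const, nsmul_eq_mul, Finset.card_univ, Fintype.card_fin, mul_one] at this
  rw [this]; ring

lemma log_hp {r : ℕ} (y : Fin r → ℝ) (hy : ∀ i, 0 < y i) :
    ∑ p ∈ Finset.univ.filter (fun p : Fin r × Fin r => p.1 ≤ p.2),
      max (Real.log (y p.1)) (Real.log (y p.2)) ≤ Real.log (hpoly r y) := by
  unfold hpoly
  have hle : ∀ p ∈ Finset.univ.filter (fun p : Fin r × Fin r => p.1 ≤ p.2),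
      ∀ j ∈ Finset.Icc p.1 p.2, y j ≤ ∑ i ∈ Finset.Icc p.1 p.2, y i := fun p _ j hj =>
    Finset.single_le_sum (f := y) (fun i _ => (hy i).le) hj
  rw [Real.log_prod]
  · refine Finset.sum_le_sum fun p hp => ?_
    have hp' : p.1 ≤ p.2 := by simpa using hp
    exact max_le (Real.log_le_log (hy _) (hle p hp _ (by simp [hp'])))
      (Real.log_le_log (hy _) (hle p hp _ (by simp [hp'])))
  · intro p hp
    have hp' : p.1 ≤ p.2 := by simpa using hp
    exact ((hy p.1).trans_le (hle p hp _ (by simp [hp']))).ne'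

lemma abs_lem {ι : Type*} (J : Finset ι) (w : ι → ℝ) :
    (#J : ℝ) * ∑ j ∈ J, w j + (1/2) * ((#J : ℝ) * ∑ j ∈ J, |w j| - (#J : ℝ) * |∑ j ∈ J, w j|)
      ≤ ∑ a ∈ J, ∑ b ∈ J, max (w a) (w b) := by
  have hm : ∀ a b : ℝ, max a b = (a + b) / 2 + |a - b| / 2 := by
    intro a b
    rcases le_total a b with h | h
    · rw [max_eq_right h, abs_of_nonpos (by linarith)]; ring
    · rw [max_eq_left h, abs_of_nonneg (by linarith)]; ring
  have h1 : ∀ a ∈ J, (#J : ℝ) * |w a| - |∑ j ∈ J, w j| ≤ ∑ b ∈ J, |w a - w b| := by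
    intro a _
    have : |∑ b ∈ J, (w a - w b)| ≤ ∑ b ∈ J, |w a - w b| := Finset.abs_sum_le_sum_abs _ _
    rw [Finset.sum_sub_distrib, Finset.sum_const, nsmul_eq_mul] at this
    have h2 := abs_sub_abs_le_abs_sub ((#J : ℝ) * w a) (∑ j ∈ J, w j)
    rw [abs_mul, Nat.abs_cast] at h2
    linarith
  have h2 := Finset.sum_le_sum h1
  rw [Finset.sum_sub_distrib, Finset.sum_const, nsmul_eq_mul, ← Finset.mul_sum] at h2
  have h3 : ∑ a ∈ J, ∑ b ∈ J, max (w a) (w b) = (#J : ℝ) * ∑ j ∈ J, w j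
      + (1/2) * ∑ a ∈ J, ∑ b ∈ J, |w a - w b| := by
    simp_rw [hm, Finset.sum_add_distrib, ← Finset.sum_div, Finset.sum_add_distrib, Finset.sum_const,
      nsmul_eq_mul, ← Finset.mul_sum]
    ring
  rw [h3]
  linarith

lemma arith_lem (n S A L : ℝ) (hn : 1 ≤ n) (hA : 0 ≤ A) (hL : 0 ≤ L)
    (h : (n + 3) * S + (1/2) * (n * A - n * |S|) ≤ 2 * L) : S + A / 9 ≤ 2 / 3 * L := by
  rcases le_total S 0 with hS | hS
  · rw [abs_of_nonpos hS] at h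
    have : (3 * n + 6) * (S + A / 9) ≤ (3 * n + 6) * (2 / 3 * L) := by nlinarith
    exact le_of_mul_le_mul_left this (by linarith)
  · rw [abs_of_nonneg hS] at h
    have : (n + 6) * (S + A / 9) ≤ (n + 6) * (2 / 3 * L) := by nlinarith
    exact le_of_mul_le_mul_left this (by linarith)

lemma key {r : ℕ} (x T : ℝ) (hx : 1 ≤ x) (hT : (r : ℝ) ^ 2 * T = 2 * Real.log x) (y : Fin r → ℝ)
    (hy : ∀ i, 0 < y i) (h : hpoly r y ≤ x) (i : Fin r) (hi : y i ≤ 1) :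
    ∑ j ∈ univ.erase i, (Real.log (y j) - T) + (∑ j ∈ univ.erase i, |Real.log (y j) - T|) / 9
      ≤ 2 / 3 * (- Real.log (y i)) := by
  have hL : 0 ≤ - Real.log (y i) := by
    have := Real.log_nonpos (hy i).le hi
    linarith
  have hcard : (#(univ.erase i) : ℝ) + 1 = r := by
    have := Finset.card_erase_add_one (Finset.mem_univ i)
    rw [Finset.card_univ, Fintype.card_fin] at this
    exact_mod_cast this
  set J := univ.erase i with hJ
  rcases Nat.eq_zero_or_pos (#J) with h0 | h0
  · rw [Finset.card_eq_zero] at h0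
    rw [h0]; simp; linarith
  have hn : (1 : ℝ) ≤ #J := by exact_mod_cast h0
  set Y := fun j => Real.log (y j) with hY
  have hpos : 0 < hpoly r y := by
    unfold hpoly
    refine Finset.prod_pos fun p hp => ?_
    have hp' : p.1 ≤ p.2 := by simpa using hp
    exact Finset.sum_pos (fun i _ => hy i) ⟨p.1, by simp [hp']⟩
  have h1 : ∑ p ∈ Finset.univ.filter (fun p : Fin r × Fin r => p.1 ≤ p.2),
      max (Y p.1) (Y p.2) ≤ Real.log x := (log_hp y hy).trans (Real.log_le_log hpos h)
  have h2 := sum_filter_le (fun a b => max (Y a) (Y b)) (fun a b => max_comm _ _)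
  simp only [max_self] at h2
  have hs : ∀ f : Fin r → ℝ, ∑ a, f a = f i + ∑ a ∈ J, f a := fun f =>
    (Finset.add_sum_erase univ f (Finset.mem_univ i)).symm
  have h3 : Y i + 2 * ∑ a ∈ J, Y a + ∑ a ∈ J, ∑ b ∈ J, max (Y a) (Y b)
      ≤ ∑ a, ∑ b, max (Y a) (Y b) := by
    rw [hs]
    simp_rw [hs (fun b => max _ (Y b))]
    rw [Finset.sum_add_distrib, max_self]
    have e1 : ∑ a ∈ J, Y a ≤ ∑ a ∈ J, max (Y a) (Y i) := Finset.sum_le_sum fun _ _ => le_max_left _ _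
    have e2 : ∑ a ∈ J, Y a ≤ ∑ a ∈ J, max (Y i) (Y a) := Finset.sum_le_sum fun _ _ => le_max_right _ _
    linarith
  have h4 : ∑ a ∈ J, (Y a - T) = ∑ a ∈ J, Y a - #J * T := by
    rw [Finset.sum_sub_distrib, Finset.sum_const, nsmul_eq_mul]
  have h5 : ∑ a ∈ J, ∑ b ∈ J, max (Y a - T) (Y b - T)
      = ∑ a ∈ J, ∑ b ∈ J, max (Y a) (Y b) - #J * (#J * T) := by
    simp_rw [max_sub_sub_right, Finset.sum_sub_distrib, Finset.sum_const, nsmul_eq_mul]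
  have h6 := abs_lem J (fun a => Y a - T)
  rw [h5] at h6
  have h7 := hs Y
  have hT0 : 0 ≤ T := by
    have hl := Real.log_nonneg hx
    have : 0 < (r : ℝ) ^ 2 := by rw [← hcard]; positivity
    by_contra hc
    push Not at hc
    nlinarith
  have h8 : 2 * Real.log x ≤ (#J : ℝ) * (#J * T) + 3 * (#J * T) := by
    rw [← hT, ← hcard]
    nlinarith
  refine arith_lem (#J) _ _ _ hn (Finset.sum_nonneg fun _ _ => abs_nonneg _) hL ?_
  have : Y i = Real.log (y i) := rfl
  linarith

noncomputable def phi (v : ℝ) : ℝ := if v ≤ 0 then 0 else if v ≤ 1 then v ^ (-(8/9) : ℝ) else v ^ (-(10/9) : ℝ)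
noncomputable def psi (v : ℝ) : ℝ := (Set.Ioc (0:ℝ) 1).indicator (fun v => v ^ (-(2/3) : ℝ)) v

lemma phi_int : Integrable phi := by
  have h1 : IntegrableOn phi (Set.Iic 0) := by
    refine (integrableOn_zero).congr_fun (f := fun _ => (0:ℝ)) ?_ measurableSet_Iic
    intro v hv
    simp only [Set.mem_Iic] at hv
    simp [phi, hv]
  have h2 : IntegrableOn phi (Set.Ioc 0 1) := by
    have : IntegrableOn (fun v : ℝ => v ^ (-(8/9) : ℝ)) (Set.Ioc 0 1) := by
      rw [← intervalIntegrable_iff_integrableOn_Ioc_of_le (by norm_num)]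
      exact intervalIntegral.intervalIntegrable_rpow' (by norm_num)
    refine this.congr_fun ?_ measurableSet_Ioc
    intro v hv
    simp [phi, hv.2, hv.1.not_ge]
  have h3 : IntegrableOn phi (Set.Ioi 1) := by
    have : IntegrableOn (fun v : ℝ => v ^ (-(10/9) : ℝ)) (Set.Ioi 1) :=
      integrableOn_Ioi_rpow_of_lt (by norm_num) (by norm_num)
    refine this.congr_fun ?_ measurableSet_Ioi
    intro v hv
    have hv' : (1:ℝ) < v := hv
    have : (0:ℝ) < v := by linarith
    simp [phi, hv'.not_ge, this.not_ge]
  have := (h1.union h2).union h3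
  rw [Set.Iic_union_Ioc_eq_Iic (by norm_num), Set.Iic_union_Ioi] at this
  exact integrableOn_univ.1 this

lemma psi_int : Integrable psi := by
  unfold psi
  rw [integrable_indicator_iff measurableSet_Ioc,
    ← intervalIntegrable_iff_integrableOn_Ioc_of_le (by norm_num)]
  exact intervalIntegral.intervalIntegrable_rpow' (by norm_num)

lemma phi_eq (v : ℝ) (hv : 0 < v) : phi v = Real.exp (-(Real.log v) - |Real.log v| / 9) := by
  unfold phi
  rw [if_neg hv.not_ge]
  split_ifs with h
  · rw [Real.rpow_def_of_pos hv, abs_of_nonpos (Real.log_nonpos hv.le h)]; congr 1; ring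
  · rw [Real.rpow_def_of_pos hv, abs_of_nonneg (Real.log_nonneg (by linarith))]; congr 1; ring

lemma psi_eq (v : ℝ) (hv : 0 < v) (h1 : v ≤ 1) : psi v = Real.exp (2 / 3 * -(Real.log v)) := by
  unfold psi
  rw [Set.indicator_of_mem (show v ∈ Set.Ioc (0:ℝ) 1 from ⟨hv, h1⟩), Real.rpow_def_of_pos hv]; congr 1; ring

lemma phi_nonneg (v : ℝ) : 0 ≤ phi v := by
  unfold phi
  split_ifs with h h'
  · exact le_rfl
  · push Not at h; positivity
  · push Not at h; positivity

lemma psi_nonneg (v : ℝ) : 0 ≤ psi v := by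
  unfold psi
  exact Set.indicator_nonneg (fun v hv => Real.rpow_nonneg hv.1.le _) _

def DD (r : ℕ) (x : ℝ) : Set (Fin r → ℝ) := {y | (∀ i, 0 < y i) ∧ hpoly r y ≤ x}

lemma vol_V (r : ℕ) (hr : 1 ≤ r) (x : ℝ) (hx : 1 ≤ x) (i : Fin r) :
    volume {y ∈ DD r x | y i ≤ 1} ≤ ENNReal.ofReal
      ((∫ v, psi v) * (∫ v, phi v) ^ (r - 1) * x ^ ((2 * ((r : ℝ) - 1)) / (r : ℝ) ^ 2)) := by
  have hx0 : 0 < x := by linarith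
  have hr0 : (0 : ℝ) < r := by exact_mod_cast hr
  set τ := x ^ (2 / (r : ℝ) ^ 2) with hτ
  have hτ0 : 0 < τ := Real.rpow_pos_of_pos hx0 _
  let f : Fin r → ℝ → ℝ := fun j => if j = i then psi else fun v => phi (v / τ)
  have hf : ∀ j, Integrable (f j) := by
    intro j
    simp only [f]
    split_ifs
    · exact psi_int
    · exact phi_int.comp_div hτ0.ne'
  have hf0 : ∀ j v, 0 ≤ f j v := by
    intro j v
    simp only [f]
    split_ifs
    · exact psi_nonneg _
    · exact phi_nonneg _
  have hint : Integrable (fun y : Fin r → ℝ => ∏ j, f j (y j)) := Integrable.fintype_prod hf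
  have hval : ∫ y : Fin r → ℝ, ∏ j, f j (y j) = (∫ v, psi v) * (∫ v, phi v) ^ (r - 1) * x ^ ((2 * ((r : ℝ) - 1)) / (r : ℝ) ^ 2) := by
    rw [integral_fintype_prod_volume_eq_prod, ← Finset.mul_prod_erase univ _ (Finset.mem_univ i)]
    have : ∀ j ∈ univ.erase i, ∫ v, f j v = τ * ∫ v, phi v := by
      intro j hj
      have : j ≠ i := Finset.ne_of_mem_erase hj
      simp only [f, if_neg this]
      rw [Measure.integral_comp_div phi, abs_of_pos hτ0, smul_eq_mul]
    rw [Finset.prod_congr rfl this, Finset.prod_const, Finset.card_erase_of_mem (Finset.mem_univ i),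
      Finset.card_univ, Fintype.card_fin]
    simp only [f, if_true]
    have : x ^ ((2 * ((r : ℝ) - 1)) / (r : ℝ) ^ 2) = τ ^ (r - 1) := by
      rw [hτ, ← Real.rpow_natCast _ (r - 1), ← Real.rpow_mul hx0.le, Nat.cast_sub hr]
      congr 1
      push_cast; ring
    rw [this]; ring
  rw [← hval, ofReal_integral_eq_lintegral_ofReal hint
    (Filter.Eventually.of_forall fun y => Finset.prod_nonneg fun j _ => hf0 j _)]
  refine le_trans ?_ (mul_meas_ge_le_lintegral₀ (hint.1.aemeasurable.ennreal_ofReal) 1)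
  rw [one_mul]
  refine measure_mono ?_
  rintro y ⟨⟨hy, hh⟩, hi⟩
  simp only [Set.mem_ofPred_eq, ENNReal.one_le_ofReal]
  have hk := key x (Real.log τ) hx (by rw [hτ, Real.log_rpow hx0]; field_simp) y hy hh i hi
  rw [← Finset.mul_prod_erase univ _ (Finset.mem_univ i)]
  have : ∀ j ∈ univ.erase i, f j (y j) = Real.exp (-(Real.log (y j) - Real.log τ) - |Real.log (y j) - Real.log τ| / 9) := by
    intro j hj
    have : j ≠ i := Finset.ne_of_mem_erase hj
    simp only [f, if_neg this]
    rw [phi_eq _ (div_pos (hy j) hτ0), Real.log_div (hy j).ne' hτ0.ne']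
  rw [Finset.prod_congr rfl this, ← Real.exp_sum]
  simp only [f, if_true]
  rw [psi_eq _ (hy i) hi, ← Real.exp_add, Real.one_le_exp_iff, Finset.sum_sub_distrib,
    Finset.sum_neg_distrib, ← Finset.sum_div]
  linarith

lemma coord_le {r : ℕ} (k : Fin r → ℕ) (hk : ∀ i, 0 < k i) (i : Fin r) :
    (k i : ℝ) ≤ hpoly r (fun i => (k i : ℝ)) := by
  have h1 : ∀ p ∈ Finset.univ.filter (fun p : Fin r × Fin r => p.1 ≤ p.2),
      (1:ℝ) ≤ ∑ i ∈ Finset.Icc p.1 p.2, (k i : ℝ) := by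
    intro p hp
    have hp' : p.1 ≤ p.2 := by simpa using hp
    have := Finset.single_le_sum (f := fun i => (k i : ℝ)) (fun i _ => by positivity)
      (show p.1 ∈ Finset.Icc p.1 p.2 by simp [hp'])
    have h2 : (1:ℝ) ≤ k p.1 := by exact_mod_cast hk p.1
    linarith
  have hmem : (i, i) ∈ Finset.univ.filter (fun p : Fin r × Fin r => p.1 ≤ p.2) := by simp
  unfold hpoly
  rw [← Finset.mul_prod_erase _ _ hmem]
  have h2 : (1:ℝ) ≤ ∏ p ∈ (Finset.univ.filter (fun p : Fin r × Fin r => p.1 ≤ p.2)).erase (i, i),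
      ∑ i ∈ Finset.Icc p.1 p.2, (k i : ℝ) := by
    have := Finset.prod_le_prod (s := (Finset.univ.filter (fun p : Fin r × Fin r => p.1 ≤ p.2)).erase (i, i))
      (f := fun _ => (1:ℝ)) (g := fun p => ∑ i ∈ Finset.Icc p.1 p.2, (k i : ℝ)) (fun _ _ => zero_le_one)
      (fun p hp => h1 p (Finset.mem_of_mem_erase hp))
    simpa using this
  simp only [Finset.Icc_self, Finset.sum_singleton]
  exact le_mul_of_one_le_right (by positivity) h2

def KK (r : ℕ) (x : ℝ) : Set (Fin r → ℕ) :=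
  {k : Fin r → ℕ | (∀ i, 0 < k i) ∧ hpoly r (fun i => (k i : ℝ)) ≤ x}

lemma KK_fin (r : ℕ) (x : ℝ) : (KK r x).Finite := by
  refine (Set.Finite.pi' (t := fun _ => Set.Iic ⌊x⌋₊) (fun _ => Set.finite_Iic _)).subset ?_
  rintro k ⟨hk, h⟩ i
  exact Nat.le_floor ((coord_le k hk i).trans h)

open scoped Pointwise in
lemma vol_scale (r : ℕ) (hr : 1 ≤ r) (x : ℝ) (hx : 0 < x) :
    (volume (DD r x)).toReal = (volume (DD r 1)).toReal * x ^ ((2 : ℝ) / (r + 1)) := by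
  have hr0 : (0 : ℝ) < r := by exact_mod_cast hr
  set c := x ^ (2 / ((r : ℝ) * (r + 1))) with hc
  have hc0 : 0 < c := Real.rpow_pos_of_pos hx _
  have hcp : c ^ (#(Finset.univ.filter (fun p : Fin r × Fin r => p.1 ≤ p.2))) = x := by
    have : (#(Finset.univ.filter (fun p : Fin r × Fin r => p.1 ≤ p.2)) : ℝ) = r * (r + 1) / 2 := by
      linarith [card_filter (r := r)]
    rw [← Real.rpow_natCast, hc, ← Real.rpow_mul hx.le, this]
    convert Real.rpow_one x using 2
    field_simp
  have hset : DD r x = c • DD r 1 := by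
    ext y
    rw [Set.mem_smul_set_iff_inv_smul_mem₀ hc0.ne']
    have h1 : hpoly r y = x * hpoly r (c⁻¹ • y) := by
      have := hp_smul c (c⁻¹ • y)
      rw [hcp] at this
      rw [← this]
      congr 1
      ext i
      simp [hc0.ne']
    simp only [DD, Set.mem_ofPred_eq, h1]
    refine and_congr ?_ ?_
    · refine forall_congr' fun i => ?_
      simp [hc0]
    · exact mul_le_iff_le_one_right hx
  rw [hset, Measure.addHaar_smul, ENNReal.toReal_mul, ENNReal.toReal_ofReal (abs_nonneg _), mul_comm,
    Module.finrank_fin_fun, abs_of_pos (pow_pos hc0 _), hc, ← Real.rpow_natCast, ← Real.rpow_mul hx.le]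
  congr 2
  field_simp

lemma lower (r : ℕ) (x : ℝ) : ((KK r x).ncard : ENNReal) ≤ volume (DD r x) := by
  have hfin := KK_fin r x
  rw [Set.ncard_eq_toFinset_card _ hfin]
  let cube : (Fin r → ℕ) → Set (Fin r → ℝ) := fun k => Set.univ.pi fun i => Set.Ioc ((k i : ℝ) - 1) (k i)
  have hvol : ∀ k, volume (cube k) = 1 := by
    intro k
    simp [cube, Real.volume_pi_Ioc]
  have hd : Set.PairwiseDisjoint (↑hfin.toFinset) cube := by
    intro k _ l _ hkl
    rw [Function.onFun, Set.disjoint_left]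
    intro y hy hy'
    apply hkl
    ext i
    have h1 := hy i (Set.mem_univ i)
    have h2 := hy' i (Set.mem_univ i)
    have a1 : (k i : ℝ) < l i + 1 := by linarith [h1.1, h2.2]
    have a2 : (l i : ℝ) < k i + 1 := by linarith [h1.2, h2.1]
    have a1' : k i < l i + 1 := by exact_mod_cast a1
    have a2' : l i < k i + 1 := by exact_mod_cast a2
    omega
  have h := measure_biUnion_finset (μ := volume) hd
    (fun k _ => MeasurableSet.univ_pi fun i => measurableSet_Ioc)
  simp only [hvol, Finset.sum_const, nsmul_eq_mul, mul_one] at h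
  rw [← h]
  refine measure_mono ?_
  intro y hy
  simp only [Set.mem_iUnion, Set.Finite.mem_toFinset, exists_prop] at hy
  obtain ⟨k, ⟨hk, hkx⟩, hyk⟩ := hy
  have hpos : ∀ i, 0 < y i := by
    intro i
    have := (hyk i (Set.mem_univ i)).1
    have h2 : (1:ℝ) ≤ k i := by exact_mod_cast hk i
    linarith
  exact ⟨hpos, (hp_mono (fun i => (hpos i).le) (fun i => (hyk i (Set.mem_univ i)).2)).trans hkx⟩

lemma upper (r : ℕ) (x : ℝ) :
    volume (DD r x) ≤ ((KK r x).ncard : ENNReal) + ∑ i, volume {y ∈ DD r x | y i ≤ 1} := by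
  have hfin := KK_fin r x
  rw [Set.ncard_eq_toFinset_card _ hfin]
  let cube : (Fin r → ℕ) → Set (Fin r → ℝ) := fun k => Set.univ.pi fun i => Set.Ico (k i : ℝ) (k i + 1)
  have hvol : ∀ k, volume (cube k) = 1 := by
    intro k
    simp [cube, Real.volume_pi_Ico]
  have hsub : DD r x ⊆ (⋃ k ∈ hfin.toFinset, cube k) ∪ ⋃ i ∈ (Finset.univ : Finset (Fin r)), {y ∈ DD r x | y i ≤ 1} := by
    intro y hy
    by_cases h : ∃ i, y i ≤ 1
    · obtain ⟨i, hi⟩ := h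
      right
      simp only [Set.mem_iUnion]
      exact ⟨i, Finset.mem_univ i, hy, hi⟩
    · push Not at h
      left
      simp only [Set.mem_iUnion, Set.Finite.mem_toFinset, exists_prop]
      refine ⟨fun i => ⌊y i⌋₊, ⟨fun i => Nat.floor_pos.2 (h i).le, ?_⟩, ?_⟩
      · exact (hp_mono (fun i => by positivity) (fun i => Nat.floor_le (hy.1 i).le)).trans hy.2
      · intro i _
        exact ⟨Nat.floor_le (hy.1 i).le, Nat.lt_floor_add_one _⟩
  refine (measure_mono hsub).trans ((measure_union_le _ _).trans ?_)
  refine add_le_add ((measure_biUnion_finset_le _ _).trans ?_) (measure_biUnion_finset_le _ _)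
  simp [hvol]

theorem stmt2 (r : ℕ) (hr : 1 ≤ r) :
    ∃ C : ℝ, ∀ x : ℝ, 0 < x →
      |({k : Fin r → ℕ | (∀ i, 0 < k i) ∧ hpoly r (fun i => (k i : ℝ)) ≤ x}.ncard : ℝ)
          - (volume {y : Fin r → ℝ | (∀ i, 0 < y i) ∧ hpoly r y ≤ 1}).toReal
              * x ^ ((2 : ℝ) / (r + 1))|
        ≤ C * x ^ ((2 * ((r : ℝ) - 1)) / (r : ℝ) ^ 2) := by
  have hr0 : (0 : ℝ) < r := by exact_mod_cast hr
  set B : ℝ := (∫ v, psi v) * (∫ v, phi v) ^ (r - 1) with hB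
  have hB0 : 0 ≤ B := mul_nonneg (integral_nonneg psi_nonneg) (pow_nonneg (integral_nonneg phi_nonneg) _)
  set I : ℝ := (volume (DD r 1)).toReal with hI
  have hI0 : 0 ≤ I := ENNReal.toReal_nonneg
  refine ⟨I + r * B, fun x hx => ?_⟩
  change |((KK r x).ncard : ℝ) - I * x ^ ((2 : ℝ) / (r + 1))| ≤ _
  have hp : 0 < x ^ ((2 * ((r : ℝ) - 1)) / (r : ℝ) ^ 2) := Real.rpow_pos_of_pos hx _
  rcases lt_or_ge x 1 with h | h
  · have hK : KK r x = ∅ := by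
      rw [Set.eq_empty_iff_forall_notMem]
      rintro k ⟨hk, hkx⟩
      have := coord_le k hk ⟨0, hr⟩
      have h2 : (1:ℝ) ≤ k ⟨0, hr⟩ := by exact_mod_cast hk _
      linarith
    have hle : x ^ ((2 : ℝ) / (r + 1)) ≤ x ^ ((2 * ((r : ℝ) - 1)) / (r : ℝ) ^ 2) := by
      refine Real.rpow_le_rpow_of_exponent_ge hx h.le ?_
      rw [div_le_div_iff₀ (by positivity) (by positivity)]
      nlinarith
    have hq : 0 < x ^ ((2 : ℝ) / (r + 1)) := Real.rpow_pos_of_pos hx _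
    rw [hK, Set.ncard_empty, Nat.cast_zero, zero_sub, abs_neg, abs_of_nonneg (by positivity)]
    have : 0 ≤ r * B * x ^ ((2 * ((r : ℝ) - 1)) / (r : ℝ) ^ 2) := by positivity
    nlinarith
  · rw [hI, ← vol_scale r hr x hx]
    have hl := lower r x
    have hu := upper r x
    have hu' : volume (DD r x) ≤ ENNReal.ofReal ((KK r x).ncard + r * (B * x ^ ((2 * ((r : ℝ) - 1)) / (r : ℝ) ^ 2))) := by
      refine hu.trans ?_
      rw [ENNReal.ofReal_add (by positivity) (by positivity), ENNReal.ofReal_natCast,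
        ENNReal.ofReal_mul hr0.le, ENNReal.ofReal_natCast]
      gcongr
      refine (Finset.sum_le_sum fun i _ => vol_V r hr x h i).trans ?_
      simp [hB]
    have hne : volume (DD r x) ≠ ⊤ := ne_top_of_le_ne_top ENNReal.ofReal_ne_top hu'
    have a1 := ENNReal.toReal_mono hne hl
    have a2 := ENNReal.toReal_le_of_le_ofReal (by positivity) hu'
    rw [ENNReal.toReal_natCast] at a1
    rw [abs_le]
    have : 0 ≤ I * x ^ ((2 * ((r : ℝ) - 1)) / (r : ℝ) ^ 2) := by positivity
    constructor <;> nlinarith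
end

section
/- Let r ∈ ℕ, define a_r(k) := (1/c_r) ∏_{1 ≤ ℓ ≤ j ≤ r} (k_ℓ + ... + k_j) with c_r := r!·(r-1)!···1!, let ϱ_r(m) := #{k ∈ ℕ^r : a_r(k) = m} and R_r(x) := Σ_{m ≤ x} ϱ_r(m). Then R_r(x) = C_r · x^{2/(r+1)} + O_r(x^{2(r-1)/r²}), where C_r := ∫_{y ∈ ℝ_{>0}^r, a_r(y) ≤ 1} dy. -/
open Finset MeasureTheory

/-- `c_r = r!(r-1)!⋯1!`. -/
def crconst (r : ℕ) : ℕ := ∏ i ∈ Finset.range r, Nat.factorial (i + 1)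

/-- The Weyl dimension polynomial `a_r(k) = h_r(k)/c_r`. -/
noncomputable def apoly (r : ℕ) (y : Fin r → ℝ) : ℝ := hpoly r y / crconst r


lemma sym_sum {r : ℕ} (f : Fin r → Fin r → ℝ) (hf : ∀ i j, f i j = f j i) :
    2 * ∑ p ∈ Finset.univ.filter (fun p : Fin r × Fin r => p.1 ≤ p.2), f p.1 p.2
      = (∑ i, ∑ j, f i j) + ∑ i, f i i := by
  have h1 : ∑ p ∈ Finset.univ.filter (fun p : Fin r × Fin r => p.1 ≤ p.2), f p.1 p.2
      = ∑ i, ∑ j, if i ≤ j then f i j else 0 := by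
    rw [Finset.sum_filter, ← Finset.univ_product_univ, Finset.sum_product]
  have h2 : ∑ i, ∑ j, (if i ≤ j then f i j else 0) = ∑ i, ∑ j, if j ≤ i then f i j else 0 := by
    rw [Finset.sum_comm]
    refine Finset.sum_congr rfl fun i _ => Finset.sum_congr rfl fun j _ => ?_
    rw [hf j i]
  have h3 : ∑ i, f i i = ∑ i, ∑ j, if i = j then f i j else 0 := by
    simp
  rw [two_mul, h1]
  nth_rewrite 2 [h2]
  rw [h3, ← Finset.sum_add_distrib, ← Finset.sum_add_distrib]
  refine Finset.sum_congr rfl fun i _ => ?_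
  rw [← Finset.sum_add_distrib, ← Finset.sum_add_distrib]
  refine Finset.sum_congr rfl fun j _ => ?_
  rcases lt_trichotomy i j with h | h | h
  · simp [h.le, h.not_ge, h.ne]
  · simp [h]
  · simp [h.le, h.not_ge, h.ne']

lemma sum_Icc_pos {r : ℕ} {y : Fin r → ℝ} (hy : ∀ i, 0 < y i) {i j : Fin r} (h : i ≤ j) :
    0 < ∑ k ∈ Finset.Icc i j, y k :=
  Finset.sum_pos (fun k _ => hy k) ⟨i, by simp [h]⟩

lemma hpoly_pos {r : ℕ} {y : Fin r → ℝ} (hy : ∀ i, 0 < y i) : 0 < hpoly r y := by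
  unfold hpoly
  refine Finset.prod_pos fun p hp => sum_Icc_pos hy (by simpa using hp)

lemma log_hpoly {r : ℕ} {y : Fin r → ℝ} (hy : ∀ i, 0 < y i) :
    (∑ i, ∑ j, max (Real.log (y i)) (Real.log (y j))) + ∑ i, Real.log (y i)
      ≤ 2 * Real.log (hpoly r y) := by
  have := sym_sum (fun i j => max (Real.log (y i)) (Real.log (y j))) (fun i j => max_comm _ _)
  simp only [max_self] at this
  rw [← this, hpoly, Real.log_prod]
  · gcongr with p hp
    have hp' : p.1 ≤ p.2 := by simpa using hp
    have hs := fun k (hk : k ∈ Finset.Icc p.1 p.2) =>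
      Finset.single_le_sum (f := y) (fun i _ => (hy i).le) hk
    refine max_le (Real.log_le_log (hy _) (hs _ ?_)) (Real.log_le_log (hy _) (hs _ ?_)) <;>
      simp [hp']
  · intro p hp
    exact (sum_Icc_pos hy (by simpa using hp)).ne'

lemma sum_max_eq {ι : Type*} (J : Finset ι) (u : ι → ℝ) :
    ∑ i ∈ J, ∑ j ∈ J, max (u i) (u j)
      = J.card * ∑ i ∈ J, u i + (1/2) * ∑ i ∈ J, ∑ j ∈ J, |u i - u j| := by
  have : ∀ a b : ℝ, max a b = (1/2) * a + (1/2) * b + (1/2) * |a - b| := by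
    intro a b
    rcases le_total a b with h | h
    · rw [max_eq_right h, abs_of_nonpos (by linarith)]; ring
    · rw [max_eq_left h, abs_of_nonneg (by linarith)]; ring
  simp only [this, Finset.sum_add_distrib, ← Finset.mul_sum, Finset.sum_const, nsmul_eq_mul]
  ring

lemma sum_abs_le {ι : Type*} (J : Finset ι) (u : ι → ℝ) :
    J.card * ∑ i ∈ J, |u i| ≤ J.card * |∑ i ∈ J, u i| + ∑ i ∈ J, ∑ j ∈ J, |u i - u j| := by
  have h : ∀ i ∈ J, J.card * |u i| ≤ |∑ i ∈ J, u i| + ∑ j ∈ J, |u i - u j| := by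
    intro i _
    have e : (J.card : ℝ) * u i = (∑ j ∈ J, u j) + ∑ j ∈ J, (u i - u j) := by
      simp [Finset.sum_sub_distrib]
    calc (J.card : ℝ) * |u i| = |(J.card : ℝ) * u i| := by rw [abs_mul, Nat.abs_cast]
      _ ≤ _ := by
        rw [e]
        refine (abs_add_le _ _).trans ?_
        gcongr
        exact Finset.abs_sum_le_sum_abs _ _
  have := Finset.sum_le_sum h
  rw [← Finset.mul_sum, Finset.sum_add_distrib] at this
  simpa using this

lemma key_ineq {r : ℕ} (t : Fin r → ℝ) (i₀ : Fin r) (L : ℝ) (hL : 0 ≤ L) (ht : t i₀ ≤ 0)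
    (h : (∑ i, ∑ j, max (t i) (t j)) + ∑ i, t i ≤ 2 * L) :
    ∑ j ∈ Finset.univ.erase i₀, ((t j - 2 / (r:ℝ)^2 * L) + (1/20) * |t j - 2 / (r:ℝ)^2 * L|)
      ≤ -(3/4) * t i₀ := by
  set J := Finset.univ.erase i₀ with hJ
  have hcard : (J.card : ℝ) + 1 = r := by
    have : J.card + 1 = r := by
      rw [hJ, Finset.card_erase_add_one (Finset.mem_univ _)]; simp
    exact_mod_cast this
  set b := 2 / (r:ℝ)^2 with hb
  set u := fun j => t j - b * L with hu
  set n := (J.card : ℝ) with hn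
  have hsplit : ∀ f : Fin r → ℝ, ∑ i, f i = f i₀ + ∑ j ∈ J, f j := fun f =>
    (Finset.add_sum_erase _ f (Finset.mem_univ i₀)).symm
  have e1 : (∑ i, ∑ j, max (t i) (t j)) = t i₀ + 2 * ∑ j ∈ J, max (t i₀) (t j)
      + ∑ i ∈ J, ∑ j ∈ J, max (t i) (t j) := by
    rw [hsplit]
    simp only [hsplit (fun j => max _ (t j)), Finset.sum_add_distrib, max_self]
    simp only [max_comm _ (t i₀)]
    ring
  have e2 : ∑ j ∈ J, t j ≤ ∑ j ∈ J, max (t i₀) (t j) :=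
    Finset.sum_le_sum fun j _ => le_max_right _ _
  rw [e1, hsplit t, sum_max_eq] at h
  have e3 := sum_abs_le J u
  have e4 : ∑ i ∈ J, ∑ j ∈ J, |t i - t j| = ∑ i ∈ J, ∑ j ∈ J, |u i - u j| := by
    simp [hu]
  have e5 : ∑ j ∈ J, t j = ∑ j ∈ J, u j + n * (b * L) := by
    simp [hu, Finset.sum_sub_distrib, hn]
  rw [e4, ← hn] at h
  rw [e5] at h e2
  set Q := ∑ i ∈ J, ∑ j ∈ J, |u i - u j| with hQ
  have hQ0 : 0 ≤ Q := Finset.sum_nonneg fun i _ => Finset.sum_nonneg fun j _ => abs_nonneg _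
  change ∑ j ∈ J, (u j + (1/20) * |u j|) ≤ _
  rw [Finset.sum_add_distrib, ← Finset.mul_sum]
  rcases Nat.eq_zero_or_pos J.card with h0 | h0
  · rw [Finset.card_eq_zero] at h0
    rw [h0]; simp; linarith
  have hn1 : 1 ≤ n := by rw [hn]; exact_mod_cast h0
  rw [← hn] at e3
  set U := ∑ j ∈ J, u j with hU
  set A := ∑ j ∈ J, |u j| with hA
  set τ := t i₀ with hτ
  have hbn : 2 * L ≤ (n + 3) * (n * (b * L)) := by
    have : 2 ≤ (n+3) * n * b := by
      rw [hb, ← hcard, mul_div_assoc', le_div_iff₀ (by positivity)]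
      nlinarith
    nlinarith
  have h' : 2 * τ + (n+3) * U + (1/2) * Q ≤ 0 := by nlinarith
  rcases le_total 0 U with hU0 | hU0
  · rw [abs_of_nonneg hU0] at e3
    have a1 : 2 * U ≤ -τ := by nlinarith
    have a2 : Q ≤ -4 * τ := by nlinarith
    have a3 : A ≤ U + Q := by
      by_contra hc
      push Not at hc
      nlinarith
    linarith
  · rw [abs_of_nonpos hU0] at e3
    have a3 : A ≤ -9 * U - 4 * τ := by
      by_contra hc
      push Not at hc
      nlinarith
    linarith

noncomputable def phiF : ℝ → ℝ :=
  (Set.Ioi (0:ℝ)).indicator fun y => Real.exp (-(Real.log y + (1/20) * |Real.log y|))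

noncomputable def psiF : ℝ → ℝ :=
  (Set.Ioc (0:ℝ) 1).indicator fun y => y ^ (-(3/4) : ℝ)

lemma psiF_integrable : Integrable psiF := by
  unfold psiF
  rw [integrable_indicator_iff measurableSet_Ioc]
  rw [← intervalIntegrable_iff_integrableOn_Ioc_of_le zero_le_one]
  exact intervalIntegral.intervalIntegrable_rpow' (by norm_num)

lemma phiF_integrable : Integrable phiF := by
  unfold phiF
  rw [integrable_indicator_iff measurableSet_Ioi,
    ← Set.Ioc_union_Ioi_eq_Ioi (zero_le_one (α := ℝ)), integrableOn_union]
  constructor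
  · have h : IntegrableOn (fun y : ℝ => y ^ (-(19/20) : ℝ)) (Set.Ioc 0 1) := by
      rw [← intervalIntegrable_iff_integrableOn_Ioc_of_le zero_le_one]
      exact intervalIntegral.intervalIntegrable_rpow' (by norm_num)
    refine h.congr_fun (fun y hy => ?_) measurableSet_Ioc
    have hl : Real.log y ≤ 0 := Real.log_nonpos hy.1.le hy.2
    simp only [abs_of_nonpos hl, Real.rpow_def_of_pos hy.1]
    ring_nf
  · have h : IntegrableOn (fun y : ℝ => y ^ (-(21/20) : ℝ)) (Set.Ioi 1) :=
      integrableOn_Ioi_rpow_of_lt (by norm_num) (by norm_num)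
    refine h.congr_fun (fun y hy => ?_) measurableSet_Ioi
    have hy' : (1:ℝ) < y := hy
    have hl : 0 ≤ Real.log y := Real.log_nonneg hy'.le
    simp only [abs_of_nonneg hl, Real.rpow_def_of_pos (by linarith : 0 < y)]
    ring_nf

lemma phiF_nonneg (y : ℝ) : 0 ≤ phiF y :=
  Set.indicator_nonneg (fun _ _ => (Real.exp_pos _).le) _

lemma psiF_nonneg (y : ℝ) : 0 ≤ psiF y :=
  Set.indicator_nonneg (fun _ hy => Real.rpow_nonneg hy.1.le _) _

/-- the part of the region near the wall `y_i = 0` -/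
def wall (r : ℕ) (X : ℝ) (i : Fin r) : Set (Fin r → ℝ) :=
  {y | (∀ j, 0 < y j) ∧ hpoly r y ≤ X ∧ y i ≤ 1}

lemma wall_volume {r : ℕ} (i₀ : Fin r) {X : ℝ} (hX : 1 ≤ X) :
    volume (wall r X i₀) ≤ ENNReal.ofReal
      ((∫ y, psiF y) * (X ^ (2 / (r:ℝ)^2) * ∫ y, phiF y) ^ (r - 1)) := by
  classical
  have hX0 : 0 < X := by linarith
  set s := X ^ (2 / (r:ℝ)^2) with hs
  have hs0 : 0 < s := Real.rpow_pos_of_pos hX0 _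
  set f : Fin r → ℝ → ℝ := fun i => if i = i₀ then psiF else fun y => phiF (y / s) with hf
  have hfi : ∀ i, Integrable (f i) := by
    intro i
    by_cases h : i = i₀
    · simp only [hf, h, if_true]; exact psiF_integrable
    · simp only [hf, h, if_false]; exact phiF_integrable.comp_div hs0.ne'
  have hf0 : ∀ i y, 0 ≤ f i y := by
    intro i y
    by_cases h : i = i₀
    · simp only [hf, h, if_true]; exact psiF_nonneg y
    · simp only [hf, h, if_false]; exact phiF_nonneg _
  have hg : Integrable (fun y : Fin r → ℝ => ∏ i, f i (y i)) := Integrable.fintype_prod hfi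
  have hint : ∫ y : Fin r → ℝ, ∏ i, f i (y i) = (∫ y, psiF y) * (s * ∫ y, phiF y) ^ (r - 1) := by
    rw [integral_fintype_prod_volume_eq_prod, ← Finset.mul_prod_erase _ _ (Finset.mem_univ i₀)]
    congr 1
    · simp [hf]
    · rw [Finset.prod_congr rfl (g := fun _ => s * ∫ y, phiF y)]
      · simp
      · intro j hj
        have : j ≠ i₀ := Finset.ne_of_mem_erase hj
        simp only [hf, this, if_false]
        rw [Measure.integral_comp_div, abs_of_pos hs0, smul_eq_mul]
  rw [← hint, ofReal_integral_eq_lintegral_ofReal hg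
    (Filter.Eventually.of_forall fun y => Finset.prod_nonneg fun i _ => hf0 i _)]
  have hm := mul_meas_ge_le_lintegral₀ (hg.aemeasurable.ennreal_ofReal) 1
  rw [one_mul] at hm
  refine (measure_mono ?_).trans hm
  rintro y ⟨hy, hyX, hy1⟩
  simp only [Set.mem_ofPred_eq]
  rw [ENNReal.one_le_ofReal]
  have hk := key_ineq (fun i => Real.log (y i)) i₀ (Real.log X) (Real.log_nonneg hX)
    (Real.log_nonpos (hy _).le hy1) ((log_hpoly hy).trans (by
      have := Real.log_le_log (hpoly_pos hy) hyX
      linarith))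
  rw [← Finset.mul_prod_erase _ _ (Finset.mem_univ i₀)]
  have h1 : f i₀ (y i₀) = Real.exp (-(3/4) * Real.log (y i₀)) := by
    simp only [hf, if_true, psiF]
    rw [Set.indicator_of_mem (show y i₀ ∈ Set.Ioc (0:ℝ) 1 from ⟨hy _, hy1⟩),
      Real.rpow_def_of_pos (hy _), mul_comm]
  have h2 : ∀ j ∈ Finset.univ.erase i₀, f j (y j) = Real.exp (-((Real.log (y j)
      - 2 / (r:ℝ)^2 * Real.log X) + (1/20) * |Real.log (y j) - 2 / (r:ℝ)^2 * Real.log X|)) := by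
    intro j hj
    have : j ≠ i₀ := Finset.ne_of_mem_erase hj
    simp only [hf, this, if_false, phiF]
    rw [Set.indicator_of_mem (show y j / s ∈ Set.Ioi (0:ℝ) from div_pos (hy _) hs0),
      Real.log_div (hy _).ne' hs0.ne', hs, Real.log_rpow hX0]
  rw [Finset.prod_congr rfl h2, h1, ← Real.exp_sum, ← Real.exp_add, Real.one_le_exp_iff,
    Finset.sum_neg_distrib]
  linarith

lemma crconst_pos (r : ℕ) : 1 ≤ crconst r :=
  Nat.one_le_iff_ne_zero.2 (Finset.prod_ne_zero_iff.2 fun i _ => Nat.factorial_ne_zero _)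

lemma apoly_le_iff {r : ℕ} {y : Fin r → ℝ} {x : ℝ} :
    apoly r y ≤ x ↔ hpoly r y ≤ crconst r * x := by
  have : (0:ℝ) < crconst r := by exact_mod_cast crconst_pos r
  rw [apoly, div_le_iff₀ this, mul_comm]

lemma hpoly_mono {r : ℕ} {y z : Fin r → ℝ} (hy : ∀ i, 0 < y i) (h : ∀ i, y i ≤ z i) :
    hpoly r y ≤ hpoly r z := by
  unfold hpoly
  refine Finset.prod_le_prod (fun p hp => (sum_Icc_pos hy (by simpa using hp)).le) fun p _ => ?_
  exact Finset.sum_le_sum fun i _ => h i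

lemma coord_le_hpoly {r : ℕ} {y : Fin r → ℝ} (hy : ∀ i, 1 ≤ y i) (i : Fin r) :
    y i ≤ hpoly r y := by
  unfold hpoly
  have h1 : ∀ p ∈ Finset.univ.filter (fun p : Fin r × Fin r => p.1 ≤ p.2),
      1 ≤ ∑ i ∈ Finset.Icc p.1 p.2, y i := by
    intro p hp
    have hp' : p.1 ≤ p.2 := by simpa using hp
    exact (hy p.1).trans (Finset.single_le_sum (f := y) (fun i _ => by linarith [hy i])
      (by simp [hp']))
  have hm : ((i, i) : Fin r × Fin r) ∈ Finset.univ.filter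
      (fun p : Fin r × Fin r => p.1 ≤ p.2) := by simp
  rw [← Finset.mul_prod_erase _ _ hm]
  have h2 : 1 ≤ ∏ p ∈ (Finset.univ.filter (fun p : Fin r × Fin r => p.1 ≤ p.2)).erase (i, i),
      ∑ i ∈ Finset.Icc p.1 p.2, y i := by
    calc (1:ℝ) = ∏ p ∈ (Finset.univ.filter
          (fun p : Fin r × Fin r => p.1 ≤ p.2)).erase (i, i), 1 := by simp
      _ ≤ _ := Finset.prod_le_prod (fun _ _ => zero_le_one)
        fun p hp => h1 p (Finset.mem_of_mem_erase hp)
  simp only [Finset.Icc_self, Finset.sum_singleton]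
  have := hy i
  nlinarith

def npairs (r : ℕ) : ℕ := (Finset.univ.filter (fun p : Fin r × Fin r => p.1 ≤ p.2)).card

lemma npairs_eq (r : ℕ) : 2 * (npairs r : ℝ) = r * (r + 1) := by
  have := sym_sum (r := r) (fun _ _ => 1) (fun _ _ => rfl)
  simp at this
  rw [npairs, this]; ring

lemma hpoly_smul {r : ℕ} (s : ℝ) (y : Fin r → ℝ) :
    hpoly r (s • y) = s ^ npairs r * hpoly r y := by
  unfold hpoly npairs
  simp only [Pi.smul_apply, smul_eq_mul, ← Finset.mul_sum, Finset.prod_mul_distrib,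
    Finset.prod_const]

def region (r : ℕ) (x : ℝ) : Set (Fin r → ℝ) := {y | (∀ i, 0 < y i) ∧ apoly r y ≤ x}

open Pointwise in
lemma region_volume (r : ℕ) (hr : 1 ≤ r) {x : ℝ} (hx : 0 < x) :
    volume (region r x) = ENNReal.ofReal (x ^ ((2 : ℝ) / (r + 1))) * volume (region r 1) := by
  have hr' : (1:ℝ) ≤ r := by exact_mod_cast hr
  have hN := npairs_eq r
  have hN0 : npairs r ≠ 0 := by
    intro h
    rw [h] at hN
    simp at hN
    rcases hN with h | h
    · omega
    · linarith
  have hN0' : (npairs r : ℝ) ≠ 0 := by exact_mod_cast hN0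
  set s := x ^ ((npairs r : ℝ)⁻¹) with hs
  have hs0 : 0 < s := Real.rpow_pos_of_pos hx _
  have hsN : s ^ npairs r = x := Real.rpow_inv_natCast_pow hx.le hN0
  have : region r x = s • region r 1 := by
    ext y
    rw [Set.mem_smul_set_iff_inv_smul_mem₀ hs0.ne']
    simp only [region, Set.mem_ofPred_eq, apoly_le_iff, hpoly_smul, inv_pow, hsN, Pi.smul_apply,
      smul_eq_mul]
    refine and_congr (forall_congr' fun i => ?_) ?_
    · rw [mul_pos_iff_of_pos_left (inv_pos.2 hs0)]
    · rw [inv_mul_le_iff₀ hx, mul_one, mul_comm]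
  rw [this, Measure.addHaar_smul_of_nonneg _ hs0.le]
  congr 2
  rw [Module.finrank_fin_fun, hs, ← Real.rpow_natCast, ← Real.rpow_mul hx.le]
  congr 1
  rw [inv_mul_eq_div, div_eq_div_iff hN0' (by linarith)]
  linarith

lemma region_subset (r : ℕ) (x : ℝ) : region r x ⊆
    {y | y ∈ region r x ∧ ∀ i, 1 < y i} ∪ ⋃ i, wall r (crconst r * x) i := by
  intro y hy
  by_cases h : ∀ i, 1 < y i
  · exact Or.inl ⟨hy, h⟩
  · push Not at h
    obtain ⟨i, hi⟩ := h
    exact Or.inr (Set.mem_iUnion.2 ⟨i, hy.1, apoly_le_iff.1 hy.2, hi⟩)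

def latt (r : ℕ) (x : ℝ) : Set (Fin r → ℕ) :=
  {k | (∀ i, 0 < k i) ∧ apoly r (fun i => (k i : ℝ)) ≤ x}

lemma latt_finite (r : ℕ) (x : ℝ) : (latt r x).Finite := by
  refine (Set.finite_Iic (fun _ : Fin r => ⌊(crconst r : ℝ) * x⌋₊)).subset ?_
  intro k hk i
  refine Nat.le_floor ?_
  exact (coord_le_hpoly (y := fun i => (k i : ℝ))
    (fun i => by exact_mod_cast hk.1 i) i).trans (apoly_le_iff.1 hk.2)

def cube {r : ℕ} (k : Fin r → ℕ) : Set (Fin r → ℝ) :=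
  Set.univ.pi fun i => Set.Ioc ((k i : ℝ) - 1) (k i)

lemma mem_cube {r : ℕ} (k : Fin r → ℕ) (hk : ∀ i, 0 < k i) (y : Fin r → ℝ) :
    y ∈ cube k ↔ (∀ i, 0 < y i) ∧ k = fun i => ⌈y i⌉₊ := by
  simp only [cube, Set.mem_univ_pi, funext_iff, ← forall_and]
  refine forall_congr' fun i => ?_
  have h0 := hk i
  constructor
  · rintro ⟨h1, h2⟩
    have : (1:ℝ) ≤ k i := by exact_mod_cast h0
    refine ⟨by linarith, ?_⟩
    symm
    rw [Nat.ceil_eq_iff h0.ne']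
    refine ⟨?_, h2⟩
    rw [Nat.cast_sub h0]; simpa using h1
  · rintro ⟨h1, h2⟩
    have := (Nat.ceil_eq_iff h0.ne').1 h2.symm
    rw [Nat.cast_sub h0] at this
    simpa using this

lemma cubes_volume (r : ℕ) (x : ℝ) :
    volume (⋃ k ∈ latt r x, cube k) = (latt r x).ncard := by
  rw [measure_biUnion (latt_finite r x).countable]
  · have : ∀ k : latt r x, volume (cube k.1) = 1 := by
      intro k
      simp [cube, Real.volume_pi_Ioc]
    simp only [this]
    rw [ENNReal.tsum_const, mul_one, ENat.card_coe_set_eq,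
      ← (latt_finite r x).cast_ncard_eq]
    simp
  · intro k hk l hl hkl
    refine Set.disjoint_left.2 fun y h1 h2 => hkl ?_
    rw [((mem_cube k hk.1 y).1 h1).2, ((mem_cube l hl.1 y).1 h2).2]
  · intro k _
    exact MeasurableSet.univ_pi fun i => measurableSet_Ioc

lemma cubes_subset (r : ℕ) (x : ℝ) : (⋃ k ∈ latt r x, cube k) ⊆ region r x := by
  intro y hy
  simp only [Set.mem_iUnion] at hy
  obtain ⟨k, hk, hy⟩ := hy
  rw [mem_cube k hk.1] at hy
  refine ⟨hy.1, apoly_le_iff.2 ((hpoly_mono hy.1 fun i => ?_).trans (apoly_le_iff.1 hk.2))⟩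
  rw [hy.2]
  exact Nat.le_ceil _

lemma inner_volume (r : ℕ) (x : ℝ) :
    volume {y | y ∈ region r x ∧ ∀ i, 1 < y i} ≤ volume (⋃ k ∈ latt r x, cube k) := by
  rw [← measure_preimage_add_right volume (fun _ : Fin r => (1:ℝ))]
  refine measure_mono ?_
  rintro y ⟨⟨h1, h2⟩, h3⟩
  have hy : ∀ i, 0 < y i := fun i => by simpa using h3 i
  simp only [Set.mem_iUnion]
  have hpos : ∀ i, 0 < ⌈y i⌉₊ := fun i => Nat.ceil_pos.2 (hy i)
  refine ⟨fun i => ⌈y i⌉₊, ⟨hpos, ?_⟩, (mem_cube _ hpos y).2 ⟨hy, rfl⟩⟩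
  refine apoly_le_iff.2 ((hpoly_mono (fun i => ?_) fun i => ?_).trans (apoly_le_iff.1 h2))
  · exact_mod_cast hpos i
  · exact (Nat.ceil_lt_add_one (hy i).le).le

theorem stmt3 (r : ℕ) (hr : 1 ≤ r) :
    ∃ C : ℝ, ∀ x : ℝ, 0 < x →
      |({k : Fin r → ℕ | (∀ i, 0 < k i) ∧ apoly r (fun i => (k i : ℝ)) ≤ x}.ncard : ℝ)
          - (volume {y : Fin r → ℝ | (∀ i, 0 < y i) ∧ apoly r y ≤ 1}).toReal
              * x ^ ((2 : ℝ) / (r + 1))|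
        ≤ C * x ^ ((2 * ((r : ℝ) - 1)) / (r : ℝ) ^ 2) := by
  have hr' : (1:ℝ) ≤ r := by exact_mod_cast hr
  have hc1 : (1:ℝ) ≤ crconst r := by exact_mod_cast crconst_pos r
  set V := (volume (region r 1)).toReal with hV
  set b := 2 / (r:ℝ)^2 with hb
  set W : ℝ → ℝ := fun x =>
    (∫ y, psiF y) * ((crconst r * x) ^ b * ∫ y, phiF y) ^ (r - 1) with hW
  have hpsi : 0 ≤ ∫ y, psiF y := integral_nonneg psiF_nonneg
  have hphi : 0 ≤ ∫ y, phiF y := integral_nonneg phiF_nonneg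
  have hW0 : ∀ x, 0 < x → 0 ≤ W x := by
    intro x hx
    have : 0 ≤ (crconst r : ℝ) * x := by positivity
    have := Real.rpow_nonneg this b
    positivity
  -- upper estimate for the volume
  have hup : ∀ x, 1 ≤ x → volume (region r x) ≤
      (latt r x).ncard + ENNReal.ofReal (r * W x) := by
    intro x hx
    calc volume (region r x) ≤ _ := measure_mono (region_subset r x)
      _ ≤ _ := measure_union_le _ _
      _ ≤ (latt r x).ncard + ∑ i : Fin r, volume (wall r (crconst r * x) i) := by
        refine add_le_add ((inner_volume r x).trans (cubes_volume r x).le) ?_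
        exact measure_iUnion_fintype_le _ _
      _ ≤ (latt r x).ncard + ∑ i : Fin r, ENNReal.ofReal (W x) := by
        gcongr with i
        exact wall_volume i (by nlinarith)
      _ = _ := by
        rw [ENNReal.ofReal_mul (p := (r:ℝ)) (by linarith)]
        simp
  have hfin : volume (region r 1) ≠ ⊤ := by
    exact ne_top_of_le_ne_top (ENNReal.add_ne_top.2 ⟨ENNReal.natCast_ne_top _, ENNReal.ofReal_ne_top⟩) (hup 1 le_rfl)
  have hvx : ∀ x, 0 < x → (volume (region r x)).toReal = V * x ^ ((2 : ℝ) / (r + 1)) := by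
    intro x hx
    rw [region_volume r hr hx, ENNReal.toReal_mul, ENNReal.toReal_ofReal (by positivity), mul_comm]
  have hfinx : ∀ x, 0 < x → volume (region r x) ≠ ⊤ := by
    intro x hx
    rw [region_volume r hr hx]
    exact ENNReal.mul_ne_top ENNReal.ofReal_ne_top hfin
  have hlow : ∀ x, 0 < x → ((latt r x).ncard : ℝ) ≤ V * x ^ ((2 : ℝ) / (r + 1)) := by
    intro x hx
    rw [← hvx x hx]
    have := ENNReal.toReal_mono (hfinx x hx)
      ((cubes_volume r x).symm.le.trans (measure_mono (cubes_subset r x)))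
    simpa using this
  have hV0 : 0 ≤ V := ENNReal.toReal_nonneg
  refine ⟨V + r * W 1, fun x hx => ?_⟩
  change |((latt r x).ncard : ℝ) - V * x ^ ((2 : ℝ) / (r + 1))| ≤ _
  have hl := hlow x hx
  rw [abs_of_nonpos (by linarith), neg_sub]
  have hxp : 0 < x ^ ((2 * ((r : ℝ) - 1)) / (r : ℝ) ^ 2) := Real.rpow_pos_of_pos hx _
  have hW1 := hW0 1 one_pos
  have hrW : 0 ≤ r * W 1 := by positivity
  rcases le_or_gt 1 x with h1 | h1
  · have h := ENNReal.toReal_mono (ENNReal.add_ne_top.2 ⟨ENNReal.natCast_ne_top _, ENNReal.ofReal_ne_top⟩) (hup x h1)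
    rw [hvx x hx, ENNReal.toReal_add (ENNReal.natCast_ne_top _) ENNReal.ofReal_ne_top, ENNReal.toReal_natCast,
      ENNReal.toReal_ofReal (mul_nonneg (by linarith) (hW0 x hx))] at h
    have hWx : W x = W 1 * x ^ ((2 * ((r : ℝ) - 1)) / (r : ℝ) ^ 2) := by
      simp only [hW, mul_one]
      rw [Real.mul_rpow (by linarith) hx.le]
      have : x ^ ((2 * ((r : ℝ) - 1)) / (r : ℝ) ^ 2) = (x ^ b) ^ (r - 1) := by
        rw [← Real.rpow_natCast (x ^ b), ← Real.rpow_mul hx.le, Nat.cast_sub hr, hb]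
        congr 1
        push_cast
        ring
      rw [this]
      simp only [mul_pow]
      ring
    rw [hWx] at h
    nlinarith [mul_nonneg hV0 hxp.le]
  · have he : x ^ ((2 : ℝ) / (r + 1)) ≤ x ^ ((2 * ((r : ℝ) - 1)) / (r : ℝ) ^ 2) := by
      refine Real.rpow_le_rpow_of_exponent_ge hx h1.le ?_
      rw [div_le_div_iff₀ (by positivity) (by positivity)]
      nlinarith
    have : (0:ℝ) ≤ (latt r x).ncard := by positivity
    nlinarith [mul_le_mul_of_nonneg_left he hV0, mul_nonneg hrW hxp.le]
end

section
/- Let r ∈ ℕ with r ≥ 2 and 0 < ε ≤ 1/32, and set ν_r := r(r+1)/2. For any integer N ≥ 4 and real θ with ε·N^{−ν_r} ≤ θ ≤ 1/2, one has Σ_{k ∈ Λ_{N,r}} sin²(π θ a_r(k)) ≥ C_{r,ε}·N^r, where C_{r,ε} := sin²(2^{−ν_r} π ε)/32 and Λ_{N,r} := {k ∈ ℤ^r : N ≤ k_j ≤ (j+2)N}. -/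
open Finset Real

def gd (η x : ℝ) : Prop := ∀ n : ℤ, η < |x - n|

open Classical in
noncomputable def wt (η x : ℝ) : ℝ := (if gd η x then 1 else 0) + (if x ≤ η then 1 / 32 else 0)

def posInts : Set ℝ := {x | ∃ n : ℤ, 1 ≤ n ∧ x = n}

noncomputable def tent (η x : ℝ) : ℝ := max 0 (4 * η - Metric.infDist (x + η) posInts)

lemma posInts_ne : posInts.Nonempty := ⟨1, 1, le_refl _, by simp⟩

lemma tent_nonneg (η x : ℝ) : 0 ≤ tent η x := le_max_left _ _

lemma tent_small (η x : ℝ) (h : 4 * η ≤ 1 - η - x) : tent η x = 0 := by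
  apply max_eq_left
  have : 4 * η ≤ Metric.infDist (x + η) posInts := by
    rw [Metric.le_infDist posInts_ne]
    rintro y ⟨n, hn, rfl⟩
    rw [Real.dist_eq, abs_sub_comm]
    have : (1 : ℝ) ≤ n := by exact_mod_cast hn
    refine le_trans ?_ (le_abs_self _)
    linarith
  linarith

lemma tent_lip (η x w : ℝ) (hw : 0 ≤ w) : tent η (x + w) ≤ tent η x + w := by
  have h : Metric.infDist (x + η) posInts ≤ Metric.infDist (x + w + η) posInts + w := by
    have := Metric.infDist_le_infDist_add_dist (s := posInts) (x := x + η) (y := x + w + η)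
    rw [Real.dist_eq, show x + η - (x + w + η) = -w by ring, abs_neg, abs_of_nonneg hw] at this
    exact this
  unfold tent
  apply max_le
  · have := le_max_left 0 (4 * η - Metric.infDist (x + η) posInts); linarith
  · have := le_max_right 0 (4 * η - Metric.infDist (x + η) posInts); linarith

lemma infDist_eq (y : ℝ) (n : ℤ) (hn : 1 ≤ n) (h1 : (n : ℝ) ≤ y) (h2 : y ≤ n + 1 / 2) :
    Metric.infDist y posInts = y - n := by
  apply le_antisymm
  · have : Metric.infDist y posInts ≤ dist y n := Metric.infDist_le_dist_of_mem ⟨n, hn, rfl⟩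
    rwa [Real.dist_eq, abs_of_nonneg (by linarith)] at this
  · rw [Metric.le_infDist posInts_ne]
    rintro z ⟨k, hk, rfl⟩
    rw [Real.dist_eq]
    rcases le_or_gt k n with h | h
    · have : (k : ℝ) ≤ n := by exact_mod_cast h
      refine le_trans ?_ (le_abs_self _)
      linarith
    · have : (n : ℝ) + 1 ≤ k := by exact_mod_cast h
      rw [abs_sub_comm]
      refine le_trans ?_ (le_abs_self _)
      linarith

lemma tent_bad (η x w : ℝ) (hη0 : 0 < η) (hη : η ≤ 1 / 64) (hx : η < x) (hb : ¬ gd η x)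
    (hw : 0 ≤ w) (hw2 : w ≤ 2 * η) : tent η (x + w) ≤ tent η x - w := by
  unfold gd at hb
  push Not at hb
  obtain ⟨n, hn⟩ := hb
  rw [abs_le] at hn
  have hn1 : 1 ≤ n := by
    by_contra h
    have : n ≤ 0 := by omega
    have : (n : ℝ) ≤ 0 := by exact_mod_cast this
    linarith
  unfold tent
  rw [infDist_eq (x + η) n hn1 (by linarith) (by linarith),
    infDist_eq (x + w + η) n hn1 (by linarith) (by linarith), max_eq_right (by linarith), max_eq_right (by linarith)]
  linarith

lemma tent_le (η x : ℝ) (hη0 : 0 < η) (hη : η ≤ 1 / 64) (hx : 0 ≤ x) : tent η x ≤ 8 * η * x := by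
  rcases le_or_gt x (1 / 2) with h | h
  · rw [tent_small η x (by linarith)]; positivity
  · unfold tent
    have := Metric.infDist_nonneg (x := x + η) (s := posInts)
    apply max_le
    · positivity
    · nlinarith

lemma window (D : ℕ → ℕ → ℝ) (η : ℕ → ℝ) (hD : ∀ i u, D (i + 1) u = D i (u + 1) - D i u)
    (hη : ∀ i, η (i + 1) = 2 * η i) (i u : ℕ) (h : gd (η i) (D i u)) :
    ∃ j ≤ i, gd (η 0) (D 0 (u + j)) := by
  induction i generalizing u with
  | zero => exact ⟨0, le_refl _, h⟩
  | succ i ih =>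
    by_cases h1 : gd (η i) (D i u)
    · obtain ⟨j, hj, hg⟩ := ih u h1
      exact ⟨j, by omega, hg⟩
    · have h2 : gd (η i) (D i (u + 1)) := by
        unfold gd at h1
        push Not at h1
        obtain ⟨n, hn⟩ := h1
        intro k
        have := h (k - n)
        rw [hD, hη] at this
        push_cast at this
        have h3 : |D i (u + 1) - D i u - (k - n)| ≤ |D i (u + 1) - k| + |D i u - n| := by
          rw [show D i (u + 1) - D i u - (k - n) = (D i (u + 1) - k) - (D i u - n) by ring]
          exact abs_sub _ _
        linarith
      obtain ⟨j, hj, hg⟩ := ih (u + 1) h2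
      exact ⟨j + 1, by omega, by rwa [show u + (j + 1) = u + 1 + j by ring]⟩

lemma core_good (m N : ℕ) (D : ℕ → ℕ → ℝ) (η : ℕ → ℝ)
    (hD : ∀ i u, D (i + 1) u = D i (u + 1) - D i u)
    (hη : ∀ i, η (i + 1) = 2 * η i) (h : ∀ u, gd (η m) (D m u)) :
    (N : ℝ) ≤ ∑ u ∈ range ((m + 1) * N + 1), wt (η 0) (D 0 u) := by
  classical
  choose j hj hg using fun q => window D η hD hη m (q * (m + 1)) (h _)
  have hinj : Set.InjOn (fun q => q * (m + 1) + j q) (range N : Set ℕ) := by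
    intro a _ b _ hab
    simp only at hab
    have ha := hj a
    have hb := hj b
    have h1 : (a * (m + 1) + j a) / (m + 1) = a := by
      rw [mul_comm, Nat.mul_add_div (by omega), Nat.div_eq_of_lt (by omega)]; omega
    have h2 : (b * (m + 1) + j b) / (m + 1) = b := by
      rw [mul_comm, Nat.mul_add_div (by omega), Nat.div_eq_of_lt (by omega)]; omega
    rw [← h1, hab, h2]
  calc (N : ℝ) = ∑ q ∈ range N, (1 : ℝ) := by simp
    _ ≤ ∑ q ∈ range N, wt (η 0) (D 0 (q * (m + 1) + j q)) := by
        apply sum_le_sum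
        intro q _
        unfold wt
        rw [if_pos (hg q)]
        split_ifs <;> norm_num
    _ = ∑ u ∈ (range N).image (fun q => q * (m + 1) + j q), wt (η 0) (D 0 u) := by
        rw [sum_image hinj]
    _ ≤ _ := by
        apply sum_le_sum_of_subset_of_nonneg
        · intro u hu
          simp only [mem_image, mem_range] at hu ⊢
          obtain ⟨q, hq, rfl⟩ := hu
          have := hj q
          nlinarith [Nat.mul_le_mul_right (m + 1) (show q + 1 ≤ N from hq)]
        · intro u _ _
          unfold wt
          split_ifs <;> norm_num

/-- the critical order. -/
noncomputable def eo (m : ℕ) (D : ℕ → ℕ → ℝ) (η : ℕ → ℝ) (u : ℕ) : ℕ :=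
  sInf {e | ∀ f, e ≤ f → f ≤ m → D f u ≤ η f}

lemma eo_spec (m : ℕ) (D : ℕ → ℕ → ℝ) (η : ℕ → ℝ) (u : ℕ) :
    ∀ f, eo m D η u ≤ f → f ≤ m → D f u ≤ η f :=
  Nat.sInf_mem (s := {e | ∀ f, e ≤ f → f ≤ m → D f u ≤ η f}) ⟨m + 1, fun f h1 h2 => by omega⟩

lemma eo_le (m : ℕ) (D : ℕ → ℕ → ℝ) (η : ℕ → ℝ) (u e : ℕ)
    (h : ∀ f, e ≤ f → f ≤ m → D f u ≤ η f) : eo m D η u ≤ e := Nat.sInf_le h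

lemma eo_pred (m : ℕ) (D : ℕ → ℕ → ℝ) (η : ℕ → ℝ) (u e : ℕ) (he : eo m D η u = e + 1) :
    η e < D e u := by
  by_contra h
  push Not at h
  have : eo m D η u ≤ e := by
    apply eo_le
    intro f h1 h2
    rcases eq_or_lt_of_le h1 with h3 | h3
    · rw [← h3]; exact h
    · exact eo_spec m D η u f (by omega) h2
  omega

noncomputable def pot (m : ℕ) (D : ℕ → ℕ → ℝ) (η : ℕ → ℝ) (u : ℕ) : ℝ :=
  if eo m D η u = 0 then 0 else
    tent (η (eo m D η u - 1)) (D (eo m D η u - 1) u) / D (eo m D η u) u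

def nice (m : ℕ) (D : ℕ → ℕ → ℝ) (η : ℕ → ℝ) (u : ℕ) : Prop :=
  eo m D η u = 0 ∨ gd (η (eo m D η u - 1)) (D (eo m D η u - 1) u)

open Classical in
noncomputable def sg (m : ℕ) (D : ℕ → ℕ → ℝ) (η : ℕ → ℝ) (u : ℕ) : ℝ :=
  if nice m D η u then 1 else -1

section
variable (m : ℕ) (D : ℕ → ℕ → ℝ) (η : ℕ → ℝ)
    (hD : ∀ i u, D (i + 1) u = D i (u + 1) - D i u)
    (hη : ∀ i, η (i + 1) = 2 * η i) (hη0 : ∀ i, 0 < η i) (hη1 : ∀ i < m, η i ≤ 1 / 64)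
    (hpos : ∀ i ≤ m, ∀ u, 0 < D i u) (hcon : ∀ u, D (m + 1) u = 0) (hm : ∀ u, D m u ≤ η m)
include hD hη hη0 hη1 hpos hcon hm

omit hη hη0 hη1 hm in
lemma D_mono (i u : ℕ) (hi : i ≤ m) : D i u ≤ D i (u + 1) := by
  have h := hD i u
  rcases eq_or_lt_of_le hi with h1 | h1
  · subst h1; rw [hcon] at h; linarith
  · have := hpos (i + 1) h1 u; linarith

omit hD hη hη0 hη1 hpos hcon in
lemma eo_le_m (u : ℕ) : eo m D η u ≤ m := by
  apply eo_le
  intro f h1 h2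
  have : f = m := by omega
  subst this; exact hm u

omit hη hη0 hη1 hm in
lemma eo_mono (u : ℕ) : eo m D η u ≤ eo m D η (u + 1) := by
  apply eo_le
  intro f h1 h2
  exact (D_mono m D hD hpos hcon f u h2).trans (eo_spec m D η (u + 1) f h1 h2)

lemma pot_aux (u e : ℕ) (he : eo m D η u = e + 1) :
    tent (η e) (D e (u + 1)) ≤ tent (η e) (D e u) + D (e + 1) u * sg m D η u := by
  have hem := eo_le_m m D η hm u
  have hw := hpos (e + 1) (by omega) u
  have hw2 := eo_spec m D η u (e + 1) (by omega) (by omega)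
  rw [hη] at hw2
  have hx : D e (u + 1) = D e u + D (e + 1) u := by rw [hD]; ring
  rw [hx]
  unfold sg
  split_ifs with hn
  · have := tent_lip (η e) (D e u) _ hw.le
    linarith
  · have hb : ¬ gd (η e) (D e u) := by
      intro hb; apply hn; right; rw [he]; exact hb
    have := tent_bad (η e) (D e u) _ (hη0 e) (hη1 e (by omega)) (eo_pred m D η u e he) hb hw.le hw2
    linarith

lemma pot_step (u : ℕ) : pot m D η (u + 1) ≤ pot m D η u + sg m D η u := by
  have hmono := eo_mono m D η hD hpos hcon u
  have hem := eo_le_m m D η hm (u + 1)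
  have h0 : 0 ≤ pot m D η u + sg m D η u := by
    rcases Nat.eq_zero_or_eq_succ_pred (eo m D η u) with h | h
    · unfold pot sg nice
      simp [h]
    · generalize (eo m D η u).pred = e at h
      have := pot_aux m D η hD hη hη0 hη1 hpos hcon hm u e h
      have h2 := tent_nonneg (η e) (D e (u + 1))
      unfold pot
      rw [if_neg (by omega), h]
      have hw := hpos (e + 1) (by omega) u
      simp only [Nat.succ_eq_add_one, Nat.add_sub_cancel]
      rw [div_add' _ _ _ hw.ne']
      apply div_nonneg _ hw.le
      linarith
  rcases eq_or_lt_of_le hmono with h | h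
  · rcases Nat.eq_zero_or_eq_succ_pred (eo m D η u) with h' | h'
    · have : pot m D η (u + 1) = 0 := by unfold pot; rw [← h, h']; simp
      linarith
    · generalize (eo m D η u).pred = e at h'
      have := pot_aux m D η hD hη hη0 hη1 hpos hcon hm u e h'
      have h2 := tent_nonneg (η e) (D e (u + 1))
      unfold pot
      rw [if_neg (by omega), if_neg (by omega), ← h, h']
      have hw := hpos (e + 1) (by omega) u
      have hw' := hpos (e + 1) (by omega) (u + 1)
      have hww := D_mono m D hD hpos hcon (e + 1) u (by omega)
      simp only [Nat.succ_eq_add_one, Nat.add_sub_cancel]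
      calc tent (η e) (D e (u + 1)) / D (e + 1) (u + 1) ≤ tent (η e) (D e (u + 1)) / D (e + 1) u := by
            gcongr
        _ ≤ (tent (η e) (D e u) + D (e + 1) u * sg m D η u) / D (e + 1) u := by gcongr
        _ = _ := by field_simp
  · have : pot m D η (u + 1) = 0 := by
      obtain ⟨e, he⟩ : ∃ e, eo m D η (u + 1) = e + 1 := ⟨eo m D η (u + 1) - 1, by omega⟩
      unfold pot
      rw [if_neg (by omega), he]
      simp only [Nat.add_sub_cancel]
      rw [tent_small, zero_div]
      have h1 := eo_spec m D η u e (by omega) (by omega)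
      have h2 := eo_spec m D η u (e + 1) (by omega) (by omega)
      have h3 := hη e
      have h4 := hη1 e (by omega)
      have h5 := hD e u
      linarith
    linarith

lemma sg_sum (b : ℕ) : pot m D η b - pot m D η 0 ≤ ∑ u ∈ range b, sg m D η u := by
  induction b with
  | zero => simp
  | succ b ih =>
    rw [sum_range_succ]
    have := pot_step m D η hD hη hη0 hη1 hpos hcon hm b
    linarith

lemma pot_nonneg (b : ℕ) : 0 ≤ pot m D η b := by
  unfold pot
  split_ifs
  · exact le_refl _
  · exact div_nonneg (tent_nonneg _ _) (hpos _ (eo_le_m m D η hm b) b).le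

open Classical in
lemma core_small (N : ℕ) (hN : 4 ≤ N) (hm1 : 1 ≤ m)
    (hloss : ∀ i < m, 16 * η i * D i 0 ≤ N * D (i + 1) 0) :
    (N : ℝ) / 32 ≤ ∑ u ∈ range ((m + 1) * N + 1), wt (η 0) (D 0 u) := by
  obtain ⟨M, hM⟩ : ∃ M, M + m = (m + 1) * N + 2 := ⟨(m + 1) * N + 2 - m, by
    have : m ≤ (m + 1) * N := by nlinarith
    omega⟩
  set A := (range M).filter (fun u => eo m D η u = 0) with hA
  set U := (range M).filter (fun u => ¬ eo m D η u = 0 ∧ nice m D η u) with hU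
  set G := (range ((m + 1) * N + 1)).filter (fun u => gd (η 0) (D 0 u)) with hG
  set S := (range ((m + 1) * N + 1)).filter (fun u => D 0 u ≤ η 0) with hS
  have hsum : ∑ u ∈ range ((m + 1) * N + 1), wt (η 0) (D 0 u) = #G + #S / 32 := by
    unfold wt
    rw [sum_add_distrib]
    congr 1
    · rw [hG]; simp
    · rw [← sum_filter]; rw [sum_const, nsmul_eq_mul]; ring
  have hAS : #A ≤ #S := by
    apply card_le_card
    intro u hu
    simp only [hA, hS, mem_filter, mem_range] at hu ⊢
    exact ⟨by omega, eo_spec m D η u 0 (by omega) (by omega)⟩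
  have hUG : #U ≤ m * #G := by
    have key : ∀ u ∈ U, ∃ v ∈ G, u ≤ v ∧ v < u + m := by
      intro u hu
      simp only [hU, mem_filter, mem_range] at hu
      obtain ⟨h1, h2, h3⟩ := hu
      rcases h3 with h3 | h3
      · exact absurd h3 h2
      obtain ⟨j, hj, hg⟩ := window D η hD hη _ u h3
      have := eo_le_m m D η hm u
      refine ⟨u + j, ?_, by omega, by omega⟩
      simp only [hG, mem_filter, mem_range]
      exact ⟨by omega, hg⟩
    choose! v hv1 hv2 hv3 using key
    rw [mul_comm]
    have : U ⊆ G.biUnion (fun w => Finset.Ioc (w - m) w ∪ (if w < m then {0} else ∅)) := by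
      intro u hu
      rw [mem_biUnion]
      refine ⟨v u, hv1 u hu, ?_⟩
      have := hv2 u hu
      have := hv3 u hu
      rw [mem_union, mem_Ioc]
      by_cases h : u = 0
      · right; subst h; rw [if_pos (by omega)]; simp
      · left; omega
    refine (card_le_card this).trans (card_biUnion_le_card_mul _ _ _ ?_)
    intro w _
    refine (card_union_le _ _).trans ?_
    rw [Nat.card_Ioc]
    split_ifs <;> simp <;> omega
  have hnice : ∑ u ∈ range M, sg m D η u = 2 * (#A + #U) - M := by
    have h1 : ∀ u, sg m D η u = 2 * ((if eo m D η u = 0 then 1 else 0)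
        + (if ¬ eo m D η u = 0 ∧ nice m D η u then 1 else 0)) - 1 := by
      intro u
      unfold sg nice
      by_cases h : eo m D η u = 0
      · simp [h]; norm_num
      · simp only [h, false_or, if_false, not_false_iff, true_and]
        split_ifs <;> norm_num
    simp_rw [h1]
    rw [sum_sub_distrib, ← mul_sum, sum_add_distrib]
    rw [hA, hU]
    simp
  have hS1 := sg_sum m D η hD hη hη0 hη1 hpos hcon hm M
  have hS2 := pot_nonneg m D η hD hη hη0 hη1 hpos hcon hm M
  rw [hsum]
  have hMr : (M : ℝ) + m = (m + 1) * N + 2 := by exact_mod_cast hM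
  have hNr : (4 : ℝ) ≤ N := by exact_mod_cast hN
  have hmr : (1 : ℝ) ≤ m := by exact_mod_cast hm1
  have hASr : (#A : ℝ) ≤ #S := by exact_mod_cast hAS
  have hUGr : (#U : ℝ) ≤ m * #G := by exact_mod_cast hUG
  have hA0 : (0 : ℝ) ≤ #A := by positivity
  have hG0 : (0 : ℝ) ≤ #G := by positivity
  rcases le_or_gt (N : ℝ) #A with hAN | hAN
  · linarith
  suffices h : (#A : ℝ) + (N - #A) * m / 32 ≤ #A + #U by
    have : (N - #A) * m / 32 ≤ m * (#G : ℝ) := by linarith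
    have : (N - #A : ℝ) / 32 ≤ #G := by
      by_contra hc
      push Not at hc
      nlinarith
    linarith
  by_cases h0 : eo m D η 0 = 0
  · have hp0 : pot m D η 0 = 0 := by unfold pot; simp [h0]
    have h3 : (M : ℝ) ≤ 2 * (#A + #U) := by linarith
    have h4 : (N : ℝ) ≤ #A + #U := by nlinarith
    have h5 : (N : ℝ) * m / 32 ≤ #A + #U := by nlinarith
    rcases le_or_gt (m : ℝ) 32 with h | h
    · nlinarith
    · nlinarith
  · have hAe : #A = 0 := by
      rw [card_eq_zero, hA, filter_eq_empty_iff]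
      intro u _
      have : ∀ u, eo m D η 0 ≤ eo m D η u := by
        intro u
        induction u with
        | zero => exact le_refl _
        | succ u ih => exact ih.trans (eo_mono m D η hD hpos hcon u)
      have := this u
      omega
    have hp : pot m D η 0 ≤ N / 2 := by
      obtain ⟨e, he⟩ : ∃ e, eo m D η 0 = e + 1 := ⟨eo m D η 0 - 1, by omega⟩
      have hem := eo_le_m m D η hm 0
      unfold pot
      rw [if_neg h0, he]
      simp only [Nat.add_sub_cancel]
      rw [div_le_iff₀ (hpos (e + 1) (by omega) 0)]
      have h1 := tent_le (η e) (D e 0) (hη0 e) (hη1 e (by omega)) (hpos e (by omega) 0).le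
      have h2 := hloss e (by omega)
      linarith
    rw [hAe] at hnice ⊢
    push_cast at hnice ⊢
    nlinarith

end

def dif (f : ℕ → ℝ) : ℕ → ℕ → ℝ
  | 0, u => f u
  | i + 1, u => dif f i (u + 1) - dif f i u

lemma dif_smul (c : ℝ) (f : ℕ → ℝ) (i u : ℕ) : dif (fun u => c * f u) i u = c * dif f i u := by
  induction i generalizing u with
  | zero => rfl
  | succ i ih => simp only [dif, ih]; ring

lemma dif_mul_zero (t : ℝ) (Q : ℕ → ℝ) (u : ℕ) :
    dif (fun u => (u + t) * Q u) 0 u = (u + t) * dif Q 0 u := rfl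

lemma dif_mul (t : ℝ) (Q : ℕ → ℝ) (i u : ℕ) :
    dif (fun u => (u + t) * Q u) (i + 1) u
      = (u + (i + 1) + t) * dif Q (i + 1) u + (i + 1) * dif Q i u := by
  induction i generalizing u with
  | zero => simp only [dif]; push_cast; ring
  | succ i ih =>
    rw [dif, ih, ih]
    simp only [dif]; push_cast; ring

lemma dif_prod (n : ℕ) (t : Fin n → ℝ) (ht : ∀ l, 0 < t l) (K : ℝ) (hK : ∀ l, t l + n ≤ K) :
    (∀ i ≤ n, ∀ u, 0 < dif (fun u => ∏ l, ((u : ℝ) + t l)) i u) ∧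
    (∀ u, dif (fun u => ∏ l, ((u : ℝ) + t l)) n u = n.factorial) ∧
    (∀ u, dif (fun u => ∏ l, ((u : ℝ) + t l)) (n + 1) u = 0) ∧
    (∀ i < n, dif (fun u => ∏ l, ((u : ℝ) + t l)) i 0
      ≤ K * dif (fun u => ∏ l, ((u : ℝ) + t l)) (i + 1) 0) := by
  induction n with
  | zero =>
    refine ⟨?_, ?_, ?_, ?_⟩
    · intro i hi u
      have : i = 0 := by omega
      subst this; simp [dif]
    · intro u; simp [dif]
    · intro u; simp [dif]
    · intro i hi; omega
  | succ n ih =>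
    have hK' : ∀ l : Fin n, t l.succ + n ≤ K := by
      intro l; have := hK l.succ; push_cast at this; linarith
    obtain ⟨h1, h2, h3, h4⟩ := ih (fun l => t l.succ) (fun l => ht _) hK'
    simp only [Fin.prod_univ_succ]
    set Q : ℕ → ℝ := fun u => ∏ l : Fin n, ((u : ℝ) + t l.succ) with hQ
    have ht0 := ht 0
    have hK0 := hK 0
    push_cast at hK0
    have h5 : ∀ i, i ≤ n + 1 → ∀ u, 0 ≤ dif Q i u := by
      intro i hi u
      rcases Nat.lt_or_ge i (n + 1) with h | h
      · exact (h1 i (by omega) u).le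
      · have : i = n + 1 := by omega
        subst this; exact (h3 u).ge
    refine ⟨?_, ?_, ?_, ?_⟩
    · intro i hi u
      cases i with
      | zero => rw [dif_mul_zero]; have := h1 0 (by omega) u; positivity
      | succ i =>
        rw [dif_mul]
        have a := h1 i (by omega) u
        have b := h5 (i + 1) hi u
        positivity
    · intro u
      rw [dif_mul, h3, h2, Nat.factorial_succ]; push_cast; ring
    · intro u
      have : dif Q (n + 1 + 1) u = 0 := by rw [dif, h3, h3]; ring
      rw [dif_mul, h3, this]; ring
    · intro i hi
      rw [dif_mul]
      have b := h5 (i + 1) (by omega) 0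
      have hKp : 0 < K := by have : (0:ℝ) ≤ n := by positivity
                             linarith
      cases i with
      | zero =>
        rw [dif_mul_zero]
        have a := h1 0 (by omega) 0
        have c : 0 ≤ K * ((1 + t 0) * dif Q 1 0) := by positivity
        have d : t 0 * dif Q 0 0 ≤ K * dif Q 0 0 := by
          apply mul_le_mul_of_nonneg_right _ a.le
          have : (0:ℝ) ≤ n := by positivity
          linarith
        push_cast
        simp only [zero_add] at *
        linarith
      | succ i =>
        rw [dif_mul]
        have a := h1 (i + 1) (by omega) 0
        have e := h4 i (by omega)
        have c : 0 ≤ K * ((((0:ℕ):ℝ) + (((i + 1 : ℕ) : ℝ) + 1) + t 0) * dif Q (i + 1 + 1) 0) := by positivity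
        have hin : (i : ℝ) + 1 ≤ n := by exact_mod_cast (by omega : i + 1 ≤ n)
        have d : (i + 1 + t 0) * dif Q (i + 1) 0 ≤ K * dif Q (i + 1) 0 := by
          apply mul_le_mul_of_nonneg_right _ a.le
          linarith
        have g : ((i : ℝ) + 1) * dif Q i 0 ≤ (i + 1) * (K * dif Q (i + 1) 0) := by gcongr
        push_cast at c ⊢
        linarith

lemma hpoly_eq (r : ℕ) (y : Fin r → ℝ) :
    hpoly r y = ∏ j : Fin r, ∏ l ∈ Finset.Iic j, ∑ i ∈ Finset.Icc l j, y i := by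
  unfold hpoly
  rw [prod_filter, ← univ_product_univ, prod_product_right]
  apply prod_congr rfl
  intro j _
  rw [← prod_filter]
  apply prod_congr _ (fun _ _ => rfl)
  ext; simp

noncomputable def tl (m : ℕ) (y : Fin m → ℝ) (l : Fin (m + 1)) : ℝ :=
  ∑ i : Fin m, if l ≤ i.castSucc then y i else 0

lemma hpoly_snoc (m : ℕ) (y : Fin m → ℝ) (s : ℝ) :
    hpoly (m + 1) (Fin.snoc y s) = hpoly m y * ∏ l : Fin (m + 1), (s + tl m y l) := by
  rw [hpoly_eq, hpoly_eq, Fin.prod_univ_castSucc]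
  congr 1
  · apply prod_congr rfl
    intro j _
    rw [← Fin.map_castSuccEmb_Iic, prod_map]
    apply prod_congr rfl
    intro l _
    rw [Fin.coe_castSuccEmb, ← Fin.map_castSuccEmb_Icc, sum_map]
    apply sum_congr rfl
    intro i _
    simp
  · have : Finset.Iic (Fin.last m) = univ := by ext x; simp [Fin.le_last]
    rw [this]
    apply prod_congr rfl
    intro l _
    have : Finset.Icc l (Fin.last m) = univ.filter (fun x => l ≤ x) := by ext x; simp [Fin.le_last]
    rw [this, sum_filter, Fin.sum_univ_castSucc]
    simp only [Fin.snoc_last, Fin.snoc_castSucc, Fin.le_last, if_true]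
    rw [add_comm]; rfl

lemma apoly_snoc (m : ℕ) (y : Fin m → ℝ) (s : ℝ) :
    apoly (m + 1) (Fin.snoc y s) =
      apoly m y / (m + 1).factorial * ∏ l : Fin (m + 1), (s + tl m y l) := by
  unfold apoly
  rw [hpoly_snoc]
  unfold crconst
  rw [prod_range_succ]
  push_cast
  rw [mul_div_mul_comm, mul_comm_div, mul_comm_div] 
  ring

lemma apoly_zero (y : Fin 0 → ℝ) : apoly 0 y = 1 := by
  simp [apoly, hpoly, crconst]

lemma tri_succ (m : ℕ) : (m + 1) * (m + 1 + 1) / 2 = m * (m + 1) / 2 + (m + 1) := by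
  have : (m + 1) * (m + 1 + 1) = m * (m + 1) + (m + 1) * 2 := by ring
  rw [this, Nat.add_mul_div_right _ _ (by norm_num)]

lemma tri_bound (p : ℕ) : p * (p + 5) + 2 * p + 4 ≤ 8 * 2 ^ (p * (p + 1) / 2) := by
  induction p with
  | zero => norm_num
  | succ p ih =>
    rw [tri_succ, pow_add]
    rcases Nat.eq_zero_or_pos p with h | h
    · subst h; norm_num
    · have : 2 ^ 2 ≤ 2 ^ (p + 1) := Nat.pow_le_pow_right (by norm_num) (by omega)
      have h3 := Nat.mul_le_mul ih this
      nlinarith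

lemma tl_lower (m : ℕ) (N : ℝ) (y : Fin m → ℝ) (hy : ∀ i, N ≤ y i) (l : Fin (m + 1)) :
    ((m - (l : ℕ) : ℕ) : ℝ) * N ≤ tl m y l := by
  have h1 : ∑ i : Fin m, (if (l : ℕ) ≤ (i : ℕ) then N else 0) ≤ tl m y l := by
    unfold tl
    apply sum_le_sum
    intro i _
    have : (l ≤ i.castSucc) ↔ (l : ℕ) ≤ (i : ℕ) := by rw [Fin.le_def]; simp
    simp only [this]
    split_ifs
    · exact hy i
    · exact le_refl _
  refine le_trans (le_of_eq ?_) h1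
  rw [Fin.sum_univ_eq_sum_range (fun i => if (l : ℕ) ≤ i then N else 0), ← sum_filter]
  have : (range m).filter (fun i => (l : ℕ) ≤ i) = Finset.Ico (l : ℕ) m := by
    ext; simp; omega
  rw [this, sum_const, Nat.card_Ico, nsmul_eq_mul]

lemma tl_nonneg (m : ℕ) (y : Fin m → ℝ) (hy : ∀ i, 0 ≤ y i) (l : Fin (m + 1)) : 0 ≤ tl m y l := by
  have := tl_lower m 0 y hy l
  simpa using this

lemma tl_upper (m : ℕ) (N : ℝ) (hN : 0 ≤ N) (y : Fin m → ℝ) (hy0 : ∀ i, 0 ≤ y i)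
    (hy : ∀ i : Fin m, y i ≤ ((i : ℕ) + 3) * N) (l : Fin (m + 1)) :
    tl m y l ≤ m * (m + 5) / 2 * N := by
  have h1 : tl m y l ≤ ∑ i : Fin m, ((((i : ℕ) : ℝ) + 3) * N) := by
    unfold tl
    apply sum_le_sum
    intro i _
    split_ifs
    · exact hy i
    · positivity
  refine h1.trans (le_of_eq ?_)
  rw [Fin.sum_univ_eq_sum_range (fun i => ((i : ℝ) + 3) * N)]
  clear * -
  induction m with
  | zero => simp
  | succ m ih => rw [sum_range_succ, ih]; push_cast; ring

lemma prod_lower (m : ℕ) (N s : ℝ) (hN : 0 ≤ N) (y : Fin m → ℝ) (hy : ∀ i, N ≤ y i) (hs : N ≤ s) :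
    ((m + 1).factorial : ℝ) * N ^ (m + 1) ≤ ∏ l : Fin (m + 1), (s + tl m y l) := by
  have h : ∏ l : Fin (m + 1), (((m - (l : ℕ) : ℕ) + 1 : ℝ) * N) = ((m + 1).factorial : ℝ) * N ^ (m + 1) := by
    rw [Fin.prod_univ_eq_prod_range (fun l => (((m - l : ℕ) + 1 : ℝ) * N)), prod_mul_distrib]
    congr 1
    · rw [← prod_range_add_one_eq_factorial, ← prod_range_reflect]
      push_cast
      apply prod_congr rfl
      intro i hi
      congr 2
      simp only [mem_range] at hi
      omega
    · simp
  rw [← h]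
  apply prod_le_prod
  · intro l _; positivity
  · intro l _
    have := tl_lower m N y hy l
    linarith

lemma apoly_lower (m : ℕ) (N : ℝ) (hN : 0 ≤ N) (y : Fin m → ℝ) (hy : ∀ i, N ≤ y i) :
    N ^ (m * (m + 1) / 2) ≤ apoly m y := by
  induction m with
  | zero => rw [apoly_zero]; simp
  | succ m ih =>
    rw [← Fin.snoc_init_self y, apoly_snoc, tri_succ, pow_add]
    have h1 := ih (Fin.init y) (fun i => hy _)
    have h2 := prod_lower m N (y (Fin.last m)) hN (Fin.init y) (fun i => hy _) (hy _)
    have hf : (0 : ℝ) < (m + 1).factorial := by positivity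
    have h3 : N ^ (m + 1) ≤ (∏ l : Fin (m + 1), (y (Fin.last m) + tl m (Fin.init y) l)) / (m + 1).factorial := by
      rw [le_div_iff₀ hf]; linarith
    have h4 : 0 ≤ N ^ (m * (m + 1) / 2) := by positivity
    calc _ ≤ apoly m (Fin.init y) * ((∏ l : Fin (m + 1), (y (Fin.last m) + tl m (Fin.init y) l)) / (m + 1).factorial) := by
            apply mul_le_mul h1 h3 (by positivity) (h4.trans h1)
      _ = _ := by ring

lemma wt_nonneg (η x : ℝ) : 0 ≤ wt η x := by
  unfold wt
  split_ifs <;> norm_num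

lemma level_step (m N : ℕ) (hN : 4 ≤ N) (ε θ : ℝ) (hε : 0 < ε) (hε' : ε ≤ 1 / 32) (hθ : 0 < θ)
    (y : Fin m → ℝ) (hy0 : ∀ i, (N : ℝ) ≤ y i) (hy : ∀ i : Fin m, y i ≤ ((i : ℕ) + 3) * N) :
    (N : ℝ) * wt (ε / 2 ^ (m * (m + 1) / 2)) (θ * apoly m y) ≤
      ∑ u ∈ range ((m + 1 + 1) * N + 1), wt (ε / 2 ^ ((m + 1) * (m + 1 + 1) / 2))
        (θ * apoly (m + 1) (Fin.snoc y ((N : ℝ) + u))) := by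
  have hNr : (4 : ℝ) ≤ N := by exact_mod_cast hN
  have hap : 0 < apoly m y := lt_of_lt_of_le (by positivity) (apoly_lower m N (by positivity) y hy0)
  have hf : (0 : ℝ) < (m + 1).factorial := by positivity
  set T := m * (m + 1) / 2 with hT
  set c := θ * apoly m y / (m + 1).factorial with hc
  have hc0 : 0 < c := by positivity
  set P : ℕ → ℝ := fun u => ∏ l : Fin (m + 1), ((u : ℝ) + (N + tl m y l)) with hP
  set D := dif (fun u => c * P u) with hDdef
  set η : ℕ → ℝ := fun i => ε / 2 ^ ((m + 1) * (m + 1 + 1) / 2) * 2 ^ i with hη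
  set K : ℝ := N + m * (m + 5) / 2 * N + (m + 1) with hK
  have htl0 : ∀ l, 0 ≤ tl m y l := tl_nonneg m y (fun i => le_trans (by positivity) (hy0 i))
  have htl1 : ∀ l, tl m y l ≤ m * (m + 5) / 2 * N :=
    tl_upper m N (by positivity) y (fun i => le_trans (by positivity) (hy0 i)) hy
  obtain ⟨h1, h2, h3, h4⟩ := dif_prod (m + 1) (fun l => N + tl m y l)
    (fun l => by have := htl0 l; positivity) K
    (fun l => by have := htl1 l; push_cast; linarith)
  have hDs : ∀ i u, D i u = c * dif P i u := fun i u => dif_smul c P i u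
  have hsum : ∀ u : ℕ, wt (ε / 2 ^ ((m + 1) * (m + 1 + 1) / 2))
        (θ * apoly (m + 1) (Fin.snoc y ((N : ℝ) + u))) = wt (η 0) (D 0 u) := by
    intro u
    congr 1
    · simp [hη]
    · rw [apoly_snoc, hDs]
      simp only [dif, hP, hc]
      have : ∀ l, (N : ℝ) + u + tl m y l = u + (N + tl m y l) := fun l => by ring
      simp only [this]
      ring
  simp_rw [hsum]
  have hηm : η (m + 1) = ε / 2 ^ T := by
    simp only [hη, tri_succ, pow_add, ← hT]
    field_simp
  have hDm : ∀ u, D (m + 1) u = θ * apoly m y := by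
    intro u
    rw [hDs, h2, hc]; field_simp
  have hDD : ∀ i u, D (i + 1) u = D i (u + 1) - D i u := fun i u => rfl
  have hη2 : ∀ i, η (i + 1) = 2 * η i := by intro i; simp only [hη, pow_succ]; ring
  have hη0 : ∀ i, 0 < η i := by intro i; simp only [hη]; positivity
  have hT1 : (1 : ℝ) ≤ 2 ^ T := one_le_pow₀ (by norm_num)
  have hηle : ∀ i < m + 1, η i ≤ 1 / (64 * 2 ^ T) := by
    intro i hi
    have : η i ≤ η m := by
      simp only [hη]
      gcongr
      · norm_num
      · omega
    refine this.trans ?_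
    have h := hη2 m
    rw [hηm] at h
    have : η m = ε / 2 ^ T / 2 := by linarith
    rw [this, div_div, div_le_div_iff₀ (by positivity) (by positivity)]
    nlinarith
  have hη1 : ∀ i < m + 1, η i ≤ 1 / 64 := by
    intro i hi
    refine (hηle i hi).trans ?_
    apply one_div_le_one_div_of_le <;> linarith
  by_cases hg : gd (ε / 2 ^ T) (θ * apoly m y)
  · have hns : ¬ θ * apoly m y ≤ ε / 2 ^ T := by
      have := hg 0
      rw [Int.cast_zero, sub_zero, abs_of_pos (by positivity)] at this
      linarith
    have hw : wt (ε / 2 ^ T) (θ * apoly m y) = 1 := by unfold wt; rw [if_pos hg, if_neg hns]; norm_num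
    rw [hw, mul_one]
    apply core_good (m + 1) N D η hDD hη2
    intro u; rw [hηm, hDm]; exact hg
  by_cases hs : θ * apoly m y ≤ ε / 2 ^ T
  · have hw : wt (ε / 2 ^ T) (θ * apoly m y) = 1 / 32 := by unfold wt; rw [if_neg hg, if_pos hs]; norm_num
    rw [hw, mul_one_div]
    apply core_small (m + 1) D η hDD hη2 hη0 hη1 _ _ _ N hN (by omega)
    · intro i hi
      rw [hDs, hDs]
      have hk := h4 i hi
      have hK4 : K ≤ 4 * N * 2 ^ T := by
        have := tri_bound m
        have : (m : ℝ) * (m + 5) + 2 * m + 4 ≤ 8 * 2 ^ T := by exact_mod_cast this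
        have hm0 : (0 : ℝ) ≤ m := by positivity
        rw [hK]
        nlinarith
      have hp := h1 (i + 1) (by omega) 0
      have hp0 := h1 i (by omega) 0
      have hK0 : 0 < K := by positivity
      have h16 : 16 * η i * K ≤ N := by
        calc 16 * η i * K ≤ 16 * (1 / (64 * 2 ^ T)) * (4 * N * 2 ^ T) := by
              gcongr
              exact hηle i hi
          _ = N := by field_simp; norm_num
      have : 16 * η i * dif P i 0 ≤ N * dif P (i + 1) 0 := by
        calc 16 * η i * dif P i 0 ≤ 16 * η i * (K * dif P (i + 1) 0) := by
              have := hη0 i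
              gcongr
          _ = (16 * η i * K) * dif P (i + 1) 0 := by ring
          _ ≤ _ := by gcongr
      nlinarith
    · intro i hi u
      rw [hDs]; exact mul_pos hc0 (h1 i hi u)
    · intro u
      rw [hDs]; exact (congrArg (c * ·) (h3 u)).trans (mul_zero c)
    · intro u; rw [hDm, hηm]; exact hs
  · have hw : wt (ε / 2 ^ T) (θ * apoly m y) = 0 := by unfold wt; rw [if_neg hg, if_neg hs]; norm_num
    rw [hw, mul_zero]
    exact sum_nonneg (fun u _ => wt_nonneg _ _)

noncomputable abbrev bx (N r : ℕ) : Finset (Fin r → ℤ) :=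
  Fintype.piFinset (fun j : Fin r => Finset.Icc (N : ℤ) (((j : ℕ) + 3) * N))

lemma cast_snoc (m : ℕ) (k : Fin m → ℤ) (s : ℤ) :
    (fun i => ((Fin.snoc k s : Fin (m + 1) → ℤ) i : ℝ)) = Fin.snoc (fun i => (k i : ℝ)) (s : ℝ) := by
  funext i
  refine Fin.lastCases ?_ (fun j => ?_) i <;> simp

lemma bx_sum (N m : ℕ) (F : (Fin (m + 1) → ℝ) → ℝ) :
    ∑ k ∈ bx N (m + 1), F (fun i => (k i : ℝ)) =
      ∑ k ∈ bx N m, ∑ u ∈ range ((m + 1 + 1) * N + 1),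
        F (Fin.snoc (fun i => (k i : ℝ)) ((N : ℝ) + u)) := by
  rw [← sum_product']
  symm
  apply sum_bij' (i := fun (p : (Fin m → ℤ) × ℕ) _ => (Fin.snoc p.1 ((N : ℤ) + (p.2 : ℤ)) : Fin (m + 1) → ℤ))
    (j := fun (k : Fin (m + 1) → ℤ) _ => ((Fin.init k : Fin m → ℤ), (k (Fin.last m) - N).toNat))
  · rintro ⟨k, u⟩ h
    simp only [bx, mem_product, Fintype.mem_piFinset, mem_Icc, mem_range] at h ⊢
    intro j
    refine Fin.lastCases ?_ (fun j => ?_) j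
    · simp only [Fin.snoc_last, Fin.val_last]
      refine ⟨by omega, ?_⟩
      have : ((u : ℤ)) ≤ (m + 1 + 1) * N := by exact_mod_cast (by omega : u ≤ (m + 1 + 1) * N)
      linarith
    · simpa using h.1 j
  · intro k h
    simp only [bx, mem_product, Fintype.mem_piFinset, mem_Icc, mem_range] at h ⊢
    refine ⟨fun j => ?_, ?_⟩
    · simpa [Fin.init] using h j.castSucc
    · have := h (Fin.last m)
      simp only [Fin.val_last] at this
      have h2 : k (Fin.last m) - N ≤ (((m + 1 + 1) * N : ℕ) : ℤ) := by push_cast; linarith [this.2]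
      omega
  · rintro ⟨k, u⟩ h
    simp
  · intro k h
    simp only [bx, Fintype.mem_piFinset, mem_Icc] at h
    have := (h (Fin.last m)).1
    rw [Int.toNat_of_nonneg (by omega)]
    simp
  · rintro ⟨k, u⟩ h
    simp only [cast_snoc]
    push_cast
    rfl

lemma total (m N : ℕ) (hN : 4 ≤ N) (ε θ : ℝ) (hε : 0 < ε) (hε' : ε ≤ 1 / 32) (hθ : 0 < θ)
    (hθ' : θ ≤ 1 / 2) :
    (N : ℝ) ^ m / 32 ≤ ∑ k ∈ bx N m, wt (ε / 2 ^ (m * (m + 1) / 2)) (θ * apoly m (fun i => (k i : ℝ))) := by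
  induction m with
  | zero =>
    simp only [apoly_zero]
    simp only [bx, sum_const, Fintype.card_piFinset, nsmul_eq_mul]
    simp
    unfold wt
    by_cases h : θ ≤ ε
    · rw [if_pos h]; split_ifs <;> norm_num
    · have : gd ε θ := by
        intro n
        push Not at h
        rcases le_or_gt n 0 with hn | hn
        · have : (n : ℝ) ≤ 0 := by exact_mod_cast hn
          refine lt_of_lt_of_le ?_ (le_abs_self _)
          linarith
        · have : (1 : ℝ) ≤ n := by exact_mod_cast hn
          rw [abs_sub_comm]
          refine lt_of_lt_of_le ?_ (le_abs_self _)
          linarith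
      rw [if_pos this, if_neg h]; norm_num
  | succ m ih =>
    rw [bx_sum N m (fun y => wt (ε / 2 ^ ((m + 1) * (m + 1 + 1) / 2)) (θ * apoly (m + 1) y))]
    calc (N : ℝ) ^ (m + 1) / 32 = N * (N ^ m / 32) := by ring
      _ ≤ N * ∑ k ∈ bx N m, wt (ε / 2 ^ (m * (m + 1) / 2)) (θ * apoly m (fun i => (k i : ℝ))) := by
          gcongr
      _ ≤ _ := by
          rw [mul_sum]
          apply sum_le_sum
          intro k hk
          simp only [bx, Fintype.mem_piFinset, mem_Icc] at hk
          apply level_step m N hN ε θ hε hε' hθ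
          · intro i; exact_mod_cast (hk i).1
          · intro i; exact_mod_cast (hk i).2

lemma sin_lower (η x : ℝ) (h0 : 0 ≤ η) (h1 : η ≤ 1 / 2) (h : gd η x) :
    Real.sin (Real.pi * η) ^ 2 ≤ Real.sin (Real.pi * x) ^ 2 := by
  have h2 : Real.sin (Real.pi * x) ^ 2 = Real.sin (Real.pi * |x - round x|) ^ 2 := by
    have : Real.sin (Real.pi * |x - round x|) ^ 2 = Real.sin (Real.pi * (x - round x)) ^ 2 := by
      rcases abs_choice (x - round x) with h | h <;> rw [h]
      rw [mul_neg, Real.sin_neg, neg_sq]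
    rw [this, mul_sub, mul_comm Real.pi (round x : ℝ), Real.sin_sub_int_mul_pi, mul_pow]
    rcases Int.even_or_odd (round x) with h | h
    · rw [h.neg_one_zpow]; norm_num
    · rw [h.neg_one_zpow]; norm_num
  rw [h2]
  have h3 := h (round x)
  have h4 := abs_sub_round x
  have hp := Real.pi_pos
  apply pow_le_pow_left₀
  · apply Real.sin_nonneg_of_nonneg_of_le_pi
    · positivity
    · nlinarith
  · apply Real.sin_le_sin_of_le_of_le_pi_div_two
    · nlinarith
    · nlinarith
    · nlinarith

/-- Corollary 3.2: `∑_{k ∈ Λ_{N,r}} sin²(πθ a_r(k)) ≥ (sin²(2^{-ν_r}πε)/32) N^r`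
for `εN^{-ν_r} ≤ θ ≤ 1/2`, where `ν_r = r(r+1)/2`. -/
theorem stmt11 (r : ℕ) (hr : 2 ≤ r) (ε : ℝ) (hε : 0 < ε) (hε' : ε ≤ 1 / 32)
    (N : ℕ) (hN : 4 ≤ N) (θ : ℝ)
    (hθ : ε / (N : ℝ) ^ (r * (r + 1) / 2) ≤ θ) (hθ' : θ ≤ 1 / 2) :
    Real.sin (Real.pi * ε / 2 ^ (r * (r + 1) / 2)) ^ 2 / 32 * (N : ℝ) ^ r ≤
      ∑ k ∈ Fintype.piFinset (fun j : Fin r => Finset.Icc (N : ℤ) (((j : ℕ) + 3) * N)),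
        Real.sin (Real.pi * θ * apoly r (fun i => (k i : ℝ))) ^ 2 := by
  have hNr : (0 : ℝ) < N := by exact_mod_cast (by omega : 0 < N)
  have hθ0 : 0 < θ := lt_of_lt_of_le (by positivity) hθ
  have ht := total r N hN ε θ hε hε' hθ0 hθ'
  set T := r * (r + 1) / 2 with hT
  have hT1 : 1 ≤ T := by
    rw [hT, Nat.le_div_iff_mul_le (by norm_num)]; nlinarith
  have h2T : (1 : ℝ) < 2 ^ T := one_lt_pow₀ (by norm_num) (by omega)
  set q := Real.sin (Real.pi * ε / 2 ^ T) ^ 2 with hq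
  have hq0 : 0 ≤ q := sq_nonneg _
  calc q / 32 * (N : ℝ) ^ r = q * (N ^ r / 32) := by ring
    _ ≤ q * ∑ k ∈ bx N r, wt (ε / 2 ^ T) (θ * apoly r (fun i => (k i : ℝ))) := by gcongr
    _ ≤ _ := by
      rw [mul_sum]
      apply sum_le_sum
      intro k hk
      simp only [bx, Fintype.mem_piFinset, mem_Icc] at hk
      have hlow := apoly_lower r N hNr.le (fun i => (k i : ℝ)) (fun i => by exact_mod_cast (hk i).1)
      rw [← hT] at hlow
      have hns : ¬ θ * apoly r (fun i => (k i : ℝ)) ≤ ε / 2 ^ T := by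
        push Not
        have h1 : ε ≤ θ * apoly r (fun i => (k i : ℝ)) := by
          rw [div_le_iff₀ (by positivity)] at hθ
          exact hθ.trans (by gcongr)
        exact lt_of_lt_of_le (div_lt_self hε h2T) h1
      unfold wt
      rw [if_neg hns, add_zero]
      split_ifs with hg
      · rw [mul_one, hq, mul_div_assoc, mul_assoc]
        apply sin_lower _ _ (by positivity) _ hg
        exact (div_le_self hε.le h2T.le).trans (by linarith)
      · rw [mul_zero]; positivity
end
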